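/- arXiv:1001.1576 — 4 statements merged into one kernel-verified Lean document; each statement's English description precedes it below -/
import Mathlib

section
/- Let I be a compact interval. For any sequence δₙ → 0⁺ and any sequence xₙ(·) of absolutely continuous functions on I that are uniformly bounded and satisfy xₙ'(t) ∈ clconv F(xₙ(t) + δₙ·B̄₁) + δₙ·B̄₁ for a.e. t ∈ I (where B̄₁ is the closed unit ball of X and clconv denotes the closed convex hull), there exists a subsequence x_{n_k}(·) converging uniformly on I to a solution x(·) of the differential inclusion x'(t) ∈ F(x(t)) on I. -/
open Set Filter Topology MeasureTheory Metric Pointwise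

namespace DI

/-- The phase space `X = ℝ^m`. -/
abbrev X (m : ℕ) := EuclideanSpace ℝ (Fin m)

variable {m : ℕ}

/-- Standing assumptions (H1)–(H2): `F x` is a nonempty convex compact set for every `x`,
and `F` is upper semicontinuous (as a set-valued map). -/
def Standing (F : X m → Set (X m)) : Prop :=
  (∀ x, (F x).Nonempty ∧ Convex ℝ (F x) ∧ IsCompact (F x)) ∧
  (∀ x, ∀ ε > 0, ∃ δ > 0, ∀ y, dist y x < δ → F y ⊆ Metric.thickening ε (F x))

/-- `γ` is a solution of the differential inclusion `x' ∈ F x` on the set `I`: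
it is an indefinite integral (hence absolutely continuous on compact subintervals)
of an integrable selection `g` with `g u ∈ F (γ u)` for a.e. `u ∈ I`. -/
def IsSolOn (F : X m → Set (X m)) (γ : ℝ → X m) (I : Set ℝ) : Prop :=
  ∃ g : ℝ → X m,
    (∀ s ∈ I, ∀ t ∈ I, IntervalIntegrable g volume s t ∧ γ t = γ s + ∫ u in s..t, g u) ∧
    (∀ᵐ u ∂(volume.restrict I), g u ∈ F (γ u))

/-- The reachable set `ℛ(t)x` of the inclusion `x' ∈ F x`. -/
def reach (F : X m → Set (X m)) (t : ℝ) (x : X m) : Set (X m) :=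
  {y | ∃ γ : ℝ → X m, IsSolOn F γ (Icc 0 t) ∧ γ 0 = x ∧ γ t = y}

/-- `ℛ(t)A`. -/
def reachSet (F : X m → Set (X m)) (t : ℝ) (A : Set (X m)) : Set (X m) :=
  ⋃ x ∈ A, reach F t x

/-- No solution starting in `B` blows up on `[0,T]`: every solution on a subinterval
`[0,s] ⊆ [0,T]` starting in `B` extends to a solution on `[0,T]`. -/
def NoBlowupUpTo (F : X m → Set (X m)) (B : Set (X m)) (T : ℝ) : Prop :=
  ∀ s ∈ Icc (0:ℝ) T, ∀ γ : ℝ → X m, IsSolOn F γ (Icc 0 s) → γ 0 ∈ B →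
    ∃ γ' : ℝ → X m, IsSolOn F γ' (Icc 0 T) ∧ EqOn γ' γ (Icc 0 s)

/-- No solution starting in `B` blows up in finite time. -/
def NoBlowup (F : X m → Set (X m)) (B : Set (X m)) : Prop :=
  ∀ T > 0, NoBlowupUpTo F B T

/-- `A` attracts `B` (in the strong sense): no solution from `B` blows up in finite
time and `d_H(ℛ(t)B, A) → 0` as `t → ∞`. -/
def Attracts (F : X m → Set (X m)) (A B : Set (X m)) : Prop :=
  NoBlowup F B ∧
  ∀ ε > 0, ∃ T : ℝ, ∀ t ≥ T, ∀ y ∈ reachSet F t B, Metric.infDist y A < ε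

/-- The attraction basin `Ω(A)`. -/
def basin (F : X m → Set (X m)) (A : Set (X m)) : Set (X m) :=
  {x | Attracts F A {x}}

/-- `A` is positively invariant. -/
def PosInvariant (F : X m → Set (X m)) (A : Set (X m)) : Prop :=
  ∀ t ≥ (0:ℝ), reachSet F t A ⊆ A

/-- `A` is invariant. -/
def Invariant (F : X m → Set (X m)) (A : Set (X m)) : Prop :=
  ∀ t ≥ (0:ℝ), reachSet F t A = A

/-- The ω-limit set `ω(A)`. -/
def omegaLim (F : X m → Set (X m)) (A : Set (X m)) : Set (X m) :=
  {y | ∃ (t : ℕ → ℝ) (p : ℕ → X m), Tendsto t atTop atTop ∧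
    (∀ n, p n ∈ reachSet F (t n) A) ∧ Tendsto p atTop (𝓝 y)}

/-- `𝒜` is an attractor: a compact set admitting a neighborhood `U` with `ω(U) = 𝒜`. -/
def IsAttractor (F : X m → Set (X m)) (𝒜 : Set (X m)) : Prop :=
  IsCompact 𝒜 ∧ ∃ U : Set (X m), 𝒜 ⊆ interior U ∧ omegaLim F U = 𝒜

/-- `O` is an attractor neighborhood of `𝒜`: a positively invariant neighborhood of `𝒜`
contained in the attraction basin `Ω(𝒜)`. -/
def IsAttractorNbhd (F : X m → Set (X m)) (𝒜 O : Set (X m)) : Prop :=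
  𝒜 ⊆ interior O ∧ PosInvariant F O ∧ O ⊆ basin F 𝒜

/-- The attraction basin of `A` in `U`: `Ω^U(A) = Ω(A) ∩ {x ∈ U : ℛ(t)x ⊆ U ∀ t ≥ 0}`. -/
def basinIn (F : X m → Set (X m)) (U A : Set (X m)) : Set (X m) :=
  basin F A ∩ {x ∈ U | ∀ t ≥ (0:ℝ), reach F t x ⊆ U}

/-- The right-hand side of the inflated inclusion:
`clconv F(x + δ B̄₁) + δ B̄₁`. -/
def inflate (F : X m → Set (X m)) (δ : ℝ) (x : X m) : Set (X m) :=
  closure (convexHull ℝ (⋃ y ∈ Metric.closedBall x δ, F y)) +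
    Metric.closedBall (0 : X m) δ

/-- `S` is weakly invariant: through every point of `S` passes a complete
solution contained in `S`. -/
def WeaklyInvariant (F : X m → Set (X m)) (S : Set (X m)) : Prop :=
  ∀ x ∈ S, ∃ γ : ℝ → X m, IsSolOn F γ univ ∧ γ 0 = x ∧ range γ ⊆ S

/-- `A` is an attractor in `𝒜`: compact, `A ⊆ 𝒜`, and `ω(U ∩ 𝒜) = A` for some
neighborhood `U` of `A`. -/
def IsAttractorIn (F : X m → Set (X m)) (𝒜 A : Set (X m)) : Prop :=
  IsCompact A ∧ A ⊆ 𝒜 ∧ ∃ U : Set (X m), A ⊆ interior U ∧ omegaLim F (U ∩ 𝒜) = A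

/-- The dual repeller `A* = {x ∈ 𝒜 : ω(x) ∖ A ≠ ∅}` of `A` in `𝒜`. -/
def dualRepeller (F : X m → Set (X m)) (𝒜 A : Set (X m)) : Set (X m) :=
  {x ∈ 𝒜 | (omegaLim F {x} \ A).Nonempty}

/-- The ω-limit set of a complete solution. -/
def omegaOf (γ : ℝ → X m) : Set (X m) :=
  {y | ∃ t : ℕ → ℝ, Tendsto t atTop atTop ∧ Tendsto (fun n => γ (t n)) atTop (𝓝 y)}

/-- The α-limit set of a complete solution. -/
def alphaOf (γ : ℝ → X m) : Set (X m) :=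
  {y | ∃ t : ℕ → ℝ, Tendsto t atTop atBot ∧ Tendsto (fun n => γ (t n)) atTop (𝓝 y)}

/-- The unstable set `W^u(S)` (within `𝒜`). -/
def unstableSet (F : X m → Set (X m)) (𝒜 S : Set (X m)) : Set (X m) :=
  {x | ∃ γ : ℝ → X m, IsSolOn F γ univ ∧ range γ ⊆ 𝒜 ∧ γ 0 = x ∧ alphaOf γ ⊆ S}

/-- `A 0 ⊆ A 1 ⊆ ⋯ ⊆ A l` is a Morse filtration of the attractor `𝒜`. -/
def IsMorseFiltration (F : X m → Set (X m)) (𝒜 : Set (X m)) (l : ℕ)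
    (A : ℕ → Set (X m)) : Prop :=
  A 0 = ∅ ∧ A l = 𝒜 ∧ (∀ k < l, A k ⊆ A (k+1)) ∧ ∀ k ≤ l, IsAttractorIn F 𝒜 (A k)

/-- `M 1, …, M l` is a Morse decomposition of the attractor `𝒜`. -/
def IsMorseDecomposition (F : X m → Set (X m)) (𝒜 : Set (X m)) (l : ℕ)
    (M : ℕ → Set (X m)) : Prop :=
  (∀ k, 1 ≤ k → k ≤ l → IsCompact (M k) ∧ M k ⊆ 𝒜) ∧
  ∃ A : ℕ → Set (X m), IsMorseFiltration F 𝒜 l A ∧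
    ∀ k, 1 ≤ k → k ≤ l → M k = A k ∩ dualRepeller F 𝒜 (A (k-1))

/-- `V` is radially unbounded (class `𝒦∞`) on the open set `U`. -/
def RadiallyUnbounded (U : Set (X m)) (V : X m → ℝ) : Prop :=
  ∀ R > (0:ℝ), ∃ K : Set (X m), K ⊆ U ∧ IsCompact K ∧ ∀ x ∈ U \ K, V x > R

/-- `V` is locally Lipschitz on `O`. -/
def LocallyLipschitzOn (O : Set (X m)) (V : X m → ℝ) : Prop :=
  ∀ x ∈ O, ∃ ε > (0:ℝ), ∃ L : NNReal, LipschitzOnWith L V (Metric.ball x ε ∩ O)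

/-- The set-valued map `F` is locally Lipschitz:
`F x ⊆ F y + L‖x - y‖ B̄₁` on compact sets. -/
def LocallyLipschitzMap (F : X m → Set (X m)) : Prop :=
  ∀ K : Set (X m), IsCompact K → ∃ L > (0:ℝ), ∀ x ∈ K, ∀ y ∈ K,
    F x ⊆ F y + Metric.closedBall (0 : X m) (L * ‖x - y‖)

/-- The Dini supderivative `D⁺_v V(x) = limsup_{τ→0⁺} (V(x+τv) - V x)/τ`. -/
noncomputable def diniSup (V : X m → ℝ) (x v : X m) : ℝ :=
  limsup (fun τ : ℝ => (V (x + τ • v) - V x) / τ) (𝓝[>] 0)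

/-- `A` is a strong deformation retract of `Y`. -/
def IsSDR (A Y : Set (X m)) : Prop :=
  A ⊆ Y ∧ ∃ H : ℝ × X m → X m, ContinuousOn H (Icc (0:ℝ) 1 ×ˢ Y) ∧
    (∀ σ ∈ Icc (0:ℝ) 1, ∀ y ∈ Y, H (σ, y) ∈ Y) ∧
    (∀ y ∈ Y, H (0, y) = y) ∧ (∀ y ∈ Y, H (1, y) ∈ A) ∧
    (∀ σ ∈ Icc (0:ℝ) 1, ∀ a ∈ A, H (σ, a) = a)

/-- `V` is a Morse–Lyapunov function of the Morse decomposition `M` of `𝒜` on the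
attraction basin `Ω(𝒜)`: continuous, constant on each Morse set, and strictly
decreasing along solutions lying in `Ω(𝒜) ∖ 𝒟`, where `𝒟 = ⋃ₖ M k`. -/
def IsMLFunction (F : X m → Set (X m)) (𝒜 : Set (X m)) (l : ℕ) (M : ℕ → Set (X m))
    (V : X m → ℝ) : Prop :=
  ContinuousOn V (basin F 𝒜) ∧
  (∀ k, 1 ≤ k → k ≤ l → ∃ c : ℝ, ∀ x ∈ M k, V x = c) ∧
  (∀ a b : ℝ, ∀ γ : ℝ → X m, IsSolOn F γ (Icc a b) →
    (∀ t ∈ Icc a b, γ t ∈ basin F 𝒜 \ ⋃ k ∈ Icc 1 l, M k) →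
    StrictAntiOn (fun t => V (γ t)) (Icc a b))

/-- A strict Morse–Lyapunov function: in addition `V(M i) < V(M j)` whenever
`i < j` and both Morse sets are nonempty. -/
def IsStrictML (F : X m → Set (X m)) (𝒜 : Set (X m)) (l : ℕ) (M : ℕ → Set (X m))
    (V : X m → ℝ) : Prop :=
  IsMLFunction F 𝒜 l M V ∧
  ∀ i j, 1 ≤ i → i < j → j ≤ l → ∀ x ∈ M i, ∀ y ∈ M j, V x < V y



/-- A map satisfying the standing assumptions is locally bounded. -/
theorem bounded_on_ball {m : ℕ} (F : X m → Set (X m)) (hF : Standing F) (R : ℝ) :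
    ∃ M : ℝ, ∀ y ∈ closedBall (0 : X m) R, ∀ z ∈ F y, ‖z‖ ≤ M := by
  refine (isCompact_closedBall (0 : X m) R).induction_on
    (p := fun s => ∃ M : ℝ, ∀ y ∈ s, ∀ z ∈ F y, ‖z‖ ≤ M) ⟨0, by simp⟩ ?_ ?_ ?_
  · rintro s t hst ⟨M, hM⟩
    exact ⟨M, fun y hy => hM y (hst hy)⟩
  · rintro s t ⟨M, hM⟩ ⟨N, hN⟩
    refine ⟨max M N, ?_⟩
    rintro y (hy | hy) z hz
    · exact (hM y hy z hz).trans (le_max_left _ _)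
    · exact (hN y hy z hz).trans (le_max_right _ _)
  · intro x _
    obtain ⟨ρ, hρ, h⟩ := hF.2 x 1 one_pos
    obtain ⟨M, hM⟩ := (hF.1 x).2.2.isBounded.exists_norm_le
    refine ⟨ball x ρ, mem_nhdsWithin_of_mem_nhds (ball_mem_nhds x hρ), M + 1, ?_⟩
    intro y hy z hz
    obtain ⟨w, hw, hzw⟩ := mem_thickening_iff.1 (h y hy hz)
    have h1 := hM w hw
    rw [dist_eq_norm] at hzw
    have : ‖z‖ ≤ ‖z - w‖ + ‖w‖ := norm_le_norm_sub_add z w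
    linarith

/-- The inflated right-hand side stays `δ`-close to any closed convex set containing the
nearby values of `F`. -/
theorem inflate_near {m : ℕ} (F : X m → Set (X m)) (δ : ℝ) (x : X m) (K : Set (X m))
    (hK : Convex ℝ K) (hKc : IsClosed K) (h : ∀ y ∈ closedBall x δ, F y ⊆ K) :
    ∀ z ∈ inflate F δ x, ∃ p ∈ K, dist z p ≤ δ := by
  rintro z ⟨p, hp, q, hq, rfl⟩
  refine ⟨p, ?_, ?_⟩
  · exact closure_minimal (convexHull_min (iUnion₂_subset h) hK) hKc hp
  · simpa [dist_eq_norm] using hq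

/-- The mean slope of an indefinite integral lies in a closed convex set containing a.e. value
of the integrand. -/
theorem slope_mem {m : ℕ} (g : ℝ → X m) (K : Set (X m)) (hK : Convex ℝ K) (hKc : IsClosed K)
    (s t : ℝ) (hst : s < t) (hg : IntervalIntegrable g volume s t)
    (h : ∀ᵐ u ∂(volume.restrict (Ioc s t)), g u ∈ K) :
    (t - s)⁻¹ • ∫ u in s..t, g u ∈ K := by
  rw [← interval_average_eq, uIoc_of_le hst.le]
  refine hK.set_average_mem hKc ?_ ?_ h ((intervalIntegrable_iff_integrableOn_Ioc_of_le hst.le).1 hg)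
  · simp [hst]
  · simp

/-- Fundamental theorem of calculus for Lipschitz curves. -/
theorem lipschitz_ftc {m : ℕ} (x : ℝ → X m) (L : NNReal) (hx : LipschitzWith L x) (s t : ℝ) :
    IntervalIntegrable (deriv x) volume s t ∧ x t = x s + ∫ u in s..t, deriv x u := by
  have hint : ∀ s t : ℝ, IntervalIntegrable (deriv x) volume s t := by
    intro s t
    refine (intervalIntegrable_const (c := (L : ℝ))).mono_fun
      (measurable_deriv x).aestronglyMeasurable (Eventually.of_forall fun u => ?_)
    simpa using norm_deriv_le_of_lipschitz hx
  refine ⟨hint s t, ?_⟩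
  rw [eq_comm, ← eq_sub_iff_add_eq']
  ext i
  let p : X m →L[ℝ] ℝ := EuclideanSpace.proj i
  have h1 : p (∫ u in s..t, deriv x u) = ∫ u in s..t, p (deriv x u) :=
    (p.intervalIntegral_comp_comm (hint s t)).symm
  have hlip : LipschitzWith (‖p‖₊ * L) (fun u => p (x u)) := p.lipschitz.comp hx
  have h2 := (hlip.lipschitzOnWith (s := uIcc s t)).absolutelyContinuousOnInterval.integral_deriv_eq_sub
  have h3 : ∫ u in s..t, p (deriv x u) = ∫ u in s..t, deriv (fun u => p (x u)) u := by
    refine intervalIntegral.integral_congr_ae ?_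
    filter_upwards [hx.ae_differentiableAt_real] with u hu _
    exact ((p.hasFDerivAt.comp_hasDerivAt u hu.hasDerivAt).deriv).symm
  change p (∫ u in s..t, deriv x u) = p (x t - x s)
  rw [h1, h3, h2, map_sub]

/-- Any derivative of the uniform limit of approximate solutions lies in `F`. -/
theorem deriv_mem {m : ℕ} (F : X m → Set (X m)) (hF : Standing F)
    (a b : ℝ) (δ : ℕ → ℝ) (hδ : Tendsto δ atTop (𝓝 0))
    (xs : ℕ → ℝ → X m) (hsol : ∀ n, IsSolOn (inflate F (δ n)) (xs n) (Icc a b))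
    (x : ℝ → X m) (hlim : TendstoUniformlyOn xs x atTop (Icc a b))
    (t : ℝ) (ht : t ∈ Ioo a b) (hd : DifferentiableAt ℝ x t) : deriv x t ∈ F (x t) := by
  obtain ⟨-, hconv, hcomp⟩ := hF.1 (x t)
  rw [← hcomp.isClosed.closure_eq, closure_eq_iInter_cthickening]
  refine mem_iInter₂.2 fun ε hε => ?_
  obtain ⟨ρ, hρ, hus⟩ := hF.2 (x t) (ε / 2) (by positivity)
  have hKc : IsClosed (cthickening ε (F (x t))) := isClosed_cthickening
  have hK : Convex ℝ (cthickening ε (F (x t))) := hconv.cthickening ε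
  have hnear : ∀ᶠ s in 𝓝 t, dist (x s) (x t) < ρ / 3 :=
    hd.continuousAt.eventually (ball_mem_nhds _ (by positivity))
  obtain ⟨η, hη, hη'⟩ := Metric.eventually_nhds_iff.1 hnear
  have hslope : Tendsto (fun s => (s - t)⁻¹ • (x s - x t)) (𝓝[>] t) (𝓝 (deriv x t)) := by
    have := hd.hasDerivAt.tendsto_slope.mono_left
      (nhdsWithin_mono t (fun s (hs : t < s) => ne_of_gt hs))
    refine this.congr fun s => ?_
    simp [slope_def_module]
  refine hKc.mem_of_tendsto hslope ?_
  have e1 : ∀ᶠ s in 𝓝[>] t, s < b := mem_nhdsWithin_of_mem_nhds (Iio_mem_nhds ht.2)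
  have e2 : ∀ᶠ s in 𝓝[>] t, s < t + η :=
    mem_nhdsWithin_of_mem_nhds (Iio_mem_nhds (by linarith))
  filter_upwards [e1, e2, self_mem_nhdsWithin] with s hsb hsη hts
  have hts : t < s := hts
  have htI : t ∈ Icc a b := ⟨ht.1.le, ht.2.le⟩
  have hsI : s ∈ Icc a b := ⟨(ht.1.trans hts).le, hsb.le⟩
  have hT : Tendsto (fun n => (s - t)⁻¹ • (xs n s - xs n t)) atTop
      (𝓝 ((s - t)⁻¹ • (x s - x t))) :=
    ((hlim.tendsto_at hsI).sub (hlim.tendsto_at htI)).const_smul _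
  refine hKc.mem_of_tendsto hT ?_
  have d1 : ∀ᶠ n in atTop, δ n < ρ / 3 := hδ.eventually (Iio_mem_nhds (by positivity))
  have d2 : ∀ᶠ n in atTop, δ n < ε / 2 := hδ.eventually (Iio_mem_nhds (by positivity))
  filter_upwards [d1, d2, Metric.tendstoUniformlyOn_iff.1 hlim (ρ / 3) (by positivity)]
    with n hn1 hn2 hn3
  obtain ⟨g, hg, hgF⟩ := hsol n
  obtain ⟨hgi, hgs⟩ := hg t htI s hsI
  rw [hgs, add_sub_cancel_left]
  refine slope_mem g _ hK hKc t s hts hgi ?_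
  have hsub : Ioc t s ⊆ Icc a b := fun u hu => ⟨(ht.1.trans hu.1).le, hu.2.trans hsb.le⟩
  filter_upwards [ae_restrict_of_ae_restrict_of_subset hsub hgF,
    ae_restrict_mem measurableSet_Ioc] with u hu huI
  obtain ⟨p, hp, hzp⟩ := inflate_near F (δ n) (xs n u) (cthickening (ε / 2) (F (x t)))
    (hconv.cthickening _) isClosed_cthickening (by
      intro y hy
      refine (hus y ?_).trans (thickening_subset_cthickening _ _)
      have q1 := hn3 u (hsub huI)
      have q2 : dist (x u) (x t) < ρ / 3 := hη' (by
        rw [Real.dist_eq, abs_of_pos (by linarith [huI.1])]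
        linarith [huI.2])
      have q3 : dist y (xs n u) ≤ δ n := hy
      rw [dist_comm] at q1
      linarith [dist_triangle y (xs n u) (x t), dist_triangle (xs n u) (x u) (x t)]) _ hu
  have h4 : g u ∈ cthickening (ε / 2) (cthickening (ε / 2) (F (x t))) :=
    mem_cthickening_of_dist_le _ p _ _ hp (hzp.trans hn2.le)
  have h5 := cthickening_cthickening_subset (by positivity) (by positivity) _ h4
  rwa [add_halves] at h5

/-- Approximate solutions are uniformly Lipschitz, so a subsequence converges uniformly to a
Lipschitz curve. -/
theorem exists_limit {m : ℕ} (F : X m → Set (X m)) (hF : Standing F)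
    (a b : ℝ) (hab : a ≤ b)
    (δ : ℕ → ℝ) (hδ : Tendsto δ atTop (𝓝 0))
    (xs : ℕ → ℝ → X m)
    (hsol : ∀ n, IsSolOn (inflate F (δ n)) (xs n) (Icc a b))
    (C : ℝ) (hC : ∀ n, ∀ t ∈ Icc a b, ‖xs n t‖ ≤ C) :
    ∃ φ : ℕ → ℕ, StrictMono φ ∧ ∃ x : ℝ → X m, ∃ L : NNReal, LipschitzWith L x ∧
      TendstoUniformlyOn (fun k => xs (φ k)) x atTop (Icc a b) := by
  obtain ⟨D, hD⟩ := hδ.bddAbove_range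
  have hD : ∀ n, δ n ≤ D := fun n => hD ⟨n, rfl⟩
  obtain ⟨M, hM⟩ := bounded_on_ball F hF (C + D)
  let L : NNReal := Real.toNNReal (M + D)
  have hLip : ∀ n, LipschitzOnWith L (xs n) (Icc a b) := by
    intro n
    obtain ⟨g, hg, hgF⟩ := hsol n
    refine LipschitzOnWith.of_dist_le_mul fun t ht s hs => ?_
    rw [dist_eq_norm, (hg s hs t ht).2, add_sub_cancel_left, Real.dist_eq]
    refine intervalIntegral.norm_integral_le_of_norm_le_const_ae ?_
    have hsub : uIoc s t ⊆ Icc a b :=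
      uIoc_subset_uIcc.trans (ordConnected_Icc.uIcc_subset hs ht)
    have := (ae_restrict_iff' measurableSet_Icc).1 hgF
    filter_upwards [this] with u hu hus
    have huI := hsub hus
    obtain ⟨p, hp, hzp⟩ := inflate_near F (δ n) (xs n u) (closedBall 0 M)
      (convex_closedBall _ _) isClosed_closedBall (by
        intro y hy z hz
        rw [mem_closedBall_zero_iff]
        refine hM y ?_ z hz
        rw [mem_closedBall_zero_iff]
        have q1 : ‖y - xs n u‖ ≤ δ n := by simpa [dist_eq_norm] using hy
        have := norm_le_norm_sub_add y (xs n u)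
        linarith [hC n u huI, hD n]) _ (hu huI)
    rw [mem_closedBall_zero_iff] at hp
    rw [dist_eq_norm] at hzp
    have := norm_le_norm_sub_add (g u) p
    refine le_trans ?_ (Real.le_coe_toNNReal _)
    linarith [hD n]
  have hLip' : ∀ n, LipschitzWith L (fun u : Icc a b => xs n u) := fun n =>
    (lipschitzOnWith_iff_restrict.1 (hLip n))
  let f : ℕ → BoundedContinuousFunction (Icc a b) (X m) := fun n =>
    BoundedContinuousFunction.mkOfCompact ⟨fun u => xs n u, (hLip' n).continuous⟩
  have hcomp : IsCompact (closure (range f)) := by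
    refine BoundedContinuousFunction.arzela_ascoli (closedBall (0 : X m) C)
      (isCompact_closedBall _ _) _ ?_ ?_
    · rintro _ u ⟨n, rfl⟩
      simpa [f] using hC n u u.2
    · refine (LipschitzWith.uniformEquicontinuous _ L ?_).equicontinuous
      rintro ⟨_, n, rfl⟩
      exact hLip' n
  obtain ⟨y, -, φ, hφ, hy⟩ := hcomp.tendsto_subseq (fun n => subset_closure (mem_range_self n))
  have hu := BoundedContinuousFunction.tendsto_iff_tendstoUniformly.1 hy
  have hyL : LipschitzWith L y := by
    refine LipschitzWith.of_dist_le_mul fun s t => ?_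
    refine le_of_tendsto ((hu.tendsto_at s).dist (hu.tendsto_at t))
      (Eventually.of_forall fun k => ?_)
    exact (hLip' (φ k)).dist_le_mul s t
  refine ⟨φ, hφ, fun t => y (projIcc a b hab t), L, ?_, ?_⟩
  · simpa [Function.comp_def] using hyL.comp (LipschitzWith.projIcc hab)
  · rw [Metric.tendstoUniformlyOn_iff]
    intro ε hε
    filter_upwards [Metric.tendstoUniformly_iff.1 hu ε hε] with k hk t ht
    rw [projIcc_of_mem hab ht]
    exact hk ⟨t, ht⟩

/-- Lemma 2.1: uniform-limit compactness of approximate solutions.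
Any uniformly bounded sequence of solutions of the inflated inclusions
`x' ∈ clconv F(x + δₙ B̄₁) + δₙ B̄₁` with `δₙ → 0⁺` on a compact interval has a
subsequence converging uniformly to a solution of `x' ∈ F x`. -/
theorem approximate_solutions_converge {m : ℕ} (F : X m → Set (X m)) (hF : Standing F)
    (a b : ℝ) (hab : a ≤ b)
    (δ : ℕ → ℝ) (hδpos : ∀ n, 0 < δ n) (hδ : Tendsto δ atTop (𝓝 0))
    (xs : ℕ → ℝ → X m)
    (hsol : ∀ n, IsSolOn (inflate F (δ n)) (xs n) (Icc a b))
    (hbdd : ∃ C : ℝ, ∀ n, ∀ t ∈ Icc a b, ‖xs n t‖ ≤ C) :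
    ∃ φ : ℕ → ℕ, StrictMono φ ∧ ∃ x : ℝ → X m, IsSolOn F x (Icc a b) ∧
      TendstoUniformlyOn (fun k => xs (φ k)) x atTop (Icc a b) := by
  obtain ⟨C, hC⟩ := hbdd
  obtain ⟨φ, hφ, x, L, hL, hlim⟩ := exists_limit F hF a b hab δ hδ xs hsol C hC
  refine ⟨φ, hφ, x, ⟨deriv x, fun s _ t _ => lipschitz_ftc x L hL s t, ?_⟩, hlim⟩
  rw [← Measure.restrict_congr_set Ioo_ae_eq_Icc]
  filter_upwards [ae_restrict_of_ae hL.ae_differentiableAt_real,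
    ae_restrict_mem measurableSet_Ioo] with t hd ht
  exact deriv_mem F hF a b (fun k => δ (φ k)) (hδ.comp hφ.tendsto_atTop) (fun k => xs (φ k))
    (fun k => hsol (φ k)) x hlim t ht hd

end DI
end

section
/- Let 𝒜 be an attractor of the differential inclusion x' ∈ F(x) and let A ⊆ 𝒜 be an attractor in 𝒜 (i.e., there exists a neighborhood U of A with ω(U ∩ 𝒜) = A). Then A is an attractor of the differential inclusion in X. -/
open Set Filter Topology MeasureTheory Metric Pointwise

namespace DI

variable {m : ℕ}

/-- Vector-valued FTC for Lipschitz curves. -/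
lemma lip_ftc {f : ℝ → X m} {C : NNReal} (hf : LipschitzWith C f) (a b : ℝ) :
    IntervalIntegrable (deriv f) volume a b ∧ f b = f a + ∫ u in a..b, deriv f u := by
  have hint : IntervalIntegrable (deriv f) volume a b := by
    refine (intervalIntegrable_const (c := (C:ℝ)) (μ := volume) (a := a) (b := b)).mono_fun
      (measurable_deriv f).aestronglyMeasurable ?_
    refine Eventually.of_forall fun x => ?_
    have := norm_deriv_le_of_lipschitz hf (x₀ := x)
    simpa using this
  refine ⟨hint, ?_⟩
  ext i
  have h1 : ∫ x in a..b, deriv f x i = (∫ x in a..b, deriv f x) i :=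
    (EuclideanSpace.proj i : X m →L[ℝ] ℝ).intervalIntegral_comp_comm hint
  have hl : LipschitzWith (‖(EuclideanSpace.proj i : X m →L[ℝ] ℝ)‖₊ * C)
      (fun t => f t i) :=
    ((EuclideanSpace.proj i : X m →L[ℝ] ℝ).lipschitz).comp hf
  have h2 := (hl.lipschitzOnWith (s := uIcc a b)).absolutelyContinuousOnInterval.integral_deriv_eq_sub
  have h3 : ∫ x in a..b, deriv f x i = ∫ x in a..b, deriv (fun t => f t i) x := by
    apply intervalIntegral.integral_congr_ae
    filter_upwards [hf.ae_differentiableAt_real] with x hx _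
    have := ((EuclideanSpace.proj i : X m →L[ℝ] ℝ).hasFDerivAt).comp_hasDerivAt x
      hx.hasDerivAt
    exact this.deriv.symm
  rw [PiLp.add_apply, ← h1, h3, h2]
  ring

lemma sol_mono {F : X m → Set (X m)} {γ : ℝ → X m} {I J : Set ℝ} (h : IsSolOn F γ J)
    (hIJ : I ⊆ J) : IsSolOn F γ I := by
  obtain ⟨g, h1, h2⟩ := h
  exact ⟨g, fun s hs t ht => h1 s (hIJ hs) t (hIJ ht),
    ae_mono (Measure.restrict_mono hIJ le_rfl) h2⟩

lemma sol_shift {F : X m → Set (X m)} {γ : ℝ → X m} {a b c : ℝ} (h : IsSolOn F γ (Icc (a + c) (b + c))) :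
    IsSolOn F (fun u => γ (u + c)) (Icc a b) := by
  obtain ⟨g, h1, h2⟩ := h
  refine ⟨fun u => g (u + c), fun s hs t ht => ?_, ?_⟩
  · obtain ⟨h3, h4⟩ := h1 (s + c) ⟨by linarith [hs.1], by linarith [hs.2]⟩ (t + c)
      ⟨by linarith [ht.1], by linarith [ht.2]⟩
    refine ⟨?_, ?_⟩
    · have := h3.comp_add_right c
      simpa using this
    · rw [intervalIntegral.integral_comp_add_right]; exact h4
  · rw [ae_restrict_iff' measurableSet_Icc] at h2 ⊢
    have := (measurePreserving_add_right volume c).quasiMeasurePreserving.ae h2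
    filter_upwards [this] with u hu hu'
    exact hu ⟨by linarith [hu'.1], by linarith [hu'.2]⟩

lemma sol_of_base {F : X m → Set (X m)} {γ g : ℝ → X m} {a b : ℝ}
    (h : ∀ t ∈ Icc a b, IntervalIntegrable g volume a t ∧ γ t = γ a + ∫ u in a..t, g u)
    (h2 : ∀ᵐ u ∂(volume.restrict (Icc a b)), g u ∈ F (γ u)) : IsSolOn F γ (Icc a b) := by
  refine ⟨g, fun s hs t ht => ?_, h2⟩
  obtain ⟨i1, e1⟩ := h s hs
  obtain ⟨i2, e2⟩ := h t ht
  refine ⟨i1.symm.trans i2, ?_⟩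
  rw [← intervalIntegral.integral_add_adjacent_intervals i1.symm i2, e1, e2,
    intervalIntegral.integral_symm a s]
  abel

lemma sol_concat {F : X m → Set (X m)} {γ₁ γ₂ : ℝ → X m} {a b c : ℝ} (hab : a ≤ b) (hbc : b ≤ c)
    (h1 : IsSolOn F γ₁ (Icc a b)) (h2 : IsSolOn F γ₂ (Icc b c)) (e : γ₁ b = γ₂ b) :
    ∃ γ, IsSolOn F γ (Icc a c) ∧ γ a = γ₁ a ∧ γ c = γ₂ c := by
  obtain ⟨g₁, i1, m1⟩ := h1
  obtain ⟨g₂, i2, m2⟩ := h2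
  let γ : ℝ → X m := fun u => if u ≤ b then γ₁ u else γ₂ u
  let g : ℝ → X m := fun u => if u ≤ b then g₁ u else g₂ u
  have hγ1 : ∀ u ≤ b, γ u = γ₁ u := fun u hu => if_pos hu
  have hγ2 : ∀ u, b ≤ u → γ u = γ₂ u := fun u hu => by
    rcases hu.eq_or_lt with rfl | hu
    · rw [hγ1 _ le_rfl, e]
    · exact if_neg hu.not_ge
  have hg1 : ∀ u ≤ b, g u = g₁ u := fun u hu => if_pos hu
  have hg2 : ∀ u, b < u → g u = g₂ u := fun u hu => if_neg hu.not_ge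
  refine ⟨γ, ?_, hγ1 _ hab, hγ2 _ hbc⟩
  have base1 : ∀ t ∈ Icc a b, IntervalIntegrable g volume a t ∧ γ t = γ a + ∫ u in a..t, g u := by
    intro t ht
    obtain ⟨j1, j2⟩ := i1 a ⟨le_rfl, hab⟩ t ht
    have hE : EqOn g₁ g (uIoc a t) := by
      intro u hu
      rw [uIoc_of_le ht.1] at hu
      exact (hg1 u (hu.2.trans ht.2)).symm
    refine ⟨j1.congr hE, ?_⟩
    rw [hγ1 t ht.2, hγ1 a hab, j2, intervalIntegral.integral_congr_ae (Eventually.of_forall hE)]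
  refine sol_of_base (g := g) (fun t ht => ?_) ?_
  · rcases le_total t b with htb | htb
    · exact base1 t ⟨ht.1, htb⟩
    · obtain ⟨k1, k2⟩ := base1 b ⟨hab, le_rfl⟩
      obtain ⟨j1, j2⟩ := i2 b ⟨le_rfl, hbc⟩ t ⟨htb, ht.2⟩
      have hE : EqOn g₂ g (uIoc b t) := by
        intro u hu
        rw [uIoc_of_le htb] at hu
        exact (hg2 u hu.1).symm
      have j1' := j1.congr hE
      refine ⟨k1.trans j1', ?_⟩
      rw [← intervalIntegral.integral_add_adjacent_intervals k1 j1', ← add_assoc, ← k2,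
        hγ2 t htb, hγ2 b le_rfl, j2, intervalIntegral.integral_congr_ae (Eventually.of_forall hE)]
  · rw [ae_restrict_iff' measurableSet_Icc] at m1 m2 ⊢
    filter_upwards [m1, m2] with u hu1 hu2 hu
    rcases le_or_gt u b with h | h
    · rw [hγ1 u h, hg1 u h]; exact hu1 ⟨hu.1, h⟩
    · rw [hγ2 u h.le, hg2 u h]; exact hu2 ⟨h.le, hu.2⟩

lemma sol_lip {F : X m → Set (X m)} {γ : ℝ → X m} {a b M : ℝ} (h : IsSolOn F γ (Icc a b))
    (hM : ∀ t ∈ Icc a b, ∀ v ∈ F (γ t), ‖v‖ ≤ M) :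
    ∀ s ∈ Icc a b, ∀ t ∈ Icc a b, ‖γ t - γ s‖ ≤ M * |t - s| := by
  obtain ⟨g, h1, h2⟩ := h
  intro s hs t ht
  rw [(h1 s hs t ht).2, add_sub_cancel_left]
  apply intervalIntegral.norm_integral_le_of_norm_le_const_ae
  rw [ae_restrict_iff' measurableSet_Icc] at h2
  filter_upwards [h2] with u hu hu'
  have : u ∈ Icc a b := by
    have := uIoc_subset_uIcc hu'
    exact (ordConnected_Icc.uIcc_subset hs ht) this
  exact hM u this _ (hu this)

lemma sol_cont {F : X m → Set (X m)} {γ : ℝ → X m} {a b : ℝ} (h : IsSolOn F γ (Icc a b)) :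
    ContinuousOn γ (Icc a b) := by
  obtain ⟨g, h1, h2⟩ := h
  rcases le_or_gt a b with hab | hab
  · have hi := (h1 a ⟨le_rfl, hab⟩ b ⟨hab, le_rfl⟩).1
    have hi' : IntegrableOn g (uIcc a b) := by
      rw [uIcc_of_le hab, integrableOn_Icc_iff_integrableOn_Ioc]
      exact (intervalIntegrable_iff_integrableOn_Ioc_of_le hab).1 hi
    have := intervalIntegral.continuousOn_primitive_interval hi'
    rw [uIcc_of_le hab] at this
    exact (continuousOn_const.add this).congr fun t ht => (h1 a ⟨le_rfl, hab⟩ t ht).2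
  · rw [Icc_eq_empty hab.not_ge]; exact continuousOn_empty _

theorem limit_sol {F : X m → Set (X m)} (hF : Standing F) {ι : Type*} (l : Filter ι) [l.NeBot]
    (γi : ι → ℝ → X m) (γ : ℝ → X m) {a b M : ℝ} (hM0 : 0 ≤ M)
    (hsol : ∀ᶠ i in l, IsSolOn F (γi i) (Icc a b))
    (hM : ∀ᶠ i in l, ∀ t ∈ Icc a b, ∀ v ∈ F (γi i t), ‖v‖ ≤ M)
    (hlim : ∀ t ∈ Icc a b, Tendsto (fun i => γi i t) l (𝓝 (γ t))) : IsSolOn F γ (Icc a b) := by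
  have hlipi : ∀ᶠ i in l, ∀ s ∈ Icc a b, ∀ t ∈ Icc a b, ‖γi i t - γi i s‖ ≤ M * |t - s| := by
    filter_upwards [hsol, hM] with i h1 h2 using sol_lip h1 h2
  have hlip : LipschitzOnWith ⟨M, hM0⟩ γ (Icc a b) := by
    apply LipschitzOnWith.of_dist_le_mul
    intro t ht s hs
    rw [dist_eq_norm, Real.dist_eq]
    refine le_of_tendsto ((hlim t ht).sub (hlim s hs)).norm ?_
    filter_upwards [hlipi] with i hi using hi s hs t ht
  obtain ⟨f, hf, hfe⟩ := hlip.extend_finite_dimension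
  refine ⟨deriv f, fun s hs t ht => ?_, ?_⟩
  · rw [hfe hs, hfe ht]; exact lip_ftc hf s t
  · rw [← restrict_Ioo_eq_restrict_Icc, ae_restrict_iff' measurableSet_Ioo]
    filter_upwards [hf.ae_differentiableAt_real] with u hu hu'
    have huI : u ∈ Icc a b := Ioo_subset_Icc_self hu'
    obtain ⟨hne, hconv, hcpt⟩ := hF.1 (γ u)
    rw [← hcpt.isClosed.closure_eq, closure_eq_iInter_cthickening]
    simp only [mem_iInter]
    intro ε hε
    obtain ⟨δ, hδ, hδF⟩ := hF.2 (γ u) ε hε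
    refine isClosed_cthickening.mem_of_tendsto (hu.hasDerivAt.tendsto_slope_zero_right) ?_
    have hη : 0 < min (b - u) (δ / (2 * (M + 1))) := by
      apply lt_min (by linarith [hu'.2]); positivity
    filter_upwards [Ioo_mem_nhdsGT hη] with h hh
    have hh1 : h < b - u := hh.2.trans_le (min_le_left _ _)
    have hh2 : h < δ / (2 * (M + 1)) := hh.2.trans_le (min_le_right _ _)
    have hh3 : M * h < δ / 2 := by
      rw [lt_div_iff₀ (by positivity)] at hh2
      nlinarith [hh.1]
    have huh : u + h ∈ Icc a b := ⟨by linarith [hh.1, hu'.1], by linarith⟩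
    rw [← hfe huI, ← hfe huh]
    refine isClosed_cthickening.mem_of_tendsto
      (((hlim _ huh).sub (hlim _ huI)).const_smul h⁻¹) ?_
    filter_upwards [hsol, hlipi, (hlim u huI).eventually (Metric.ball_mem_nhds _ (half_pos hδ))]
      with i hi hil hib
    obtain ⟨g, g1, g2⟩ := hi
    obtain ⟨gi, ge⟩ := g1 u huI (u + h) huh
    rw [ge, add_sub_cancel_left]
    have hav : (⨍ x in u..(u+h), g x) ∈ cthickening ε (F (γ u)) := by
      have hle : u ≤ u + h := by linarith [hh.1]
      rw [uIoc_of_le hle]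
      apply (hconv.cthickening ε).set_average_mem isClosed_cthickening
      · simp [hh.1]
      · simp
      · rw [ae_restrict_iff' measurableSet_Icc] at g2
        rw [ae_restrict_iff' measurableSet_Ioc]
        filter_upwards [g2] with x hx hx'
        have hxI : x ∈ Icc a b := ⟨by linarith [hx'.1, hu'.1], by linarith [hx'.2]⟩
        apply thickening_subset_cthickening
        apply hδF (γi i x) _ (hx hxI)
        have e1 := hil u huI x hxI
        rw [abs_of_pos (by linarith [hx'.1])] at e1
        have e2 : M * (x - u) ≤ M * h := by gcongr; linarith [hx'.2]
        have e3 := dist_triangle (γi i x) (γi i u) (γ u)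
        rw [dist_eq_norm (γi i x) (γi i u)] at e3
        have e4 := mem_ball.1 hib
        linarith
      · exact (intervalIntegrable_iff_integrableOn_Ioc_of_le hle).1 gi
    rw [interval_average_eq] at hav
    simpa using hav

lemma F_bdd {F : X m → Set (X m)} (hF : Standing F) {K : Set (X m)} (hK : IsCompact K) :
    ∃ M : ℝ, 0 ≤ M ∧ ∀ x ∈ K, ∀ v ∈ F x, ‖v‖ ≤ M := by
  refine hK.induction_on (p := fun S => ∃ M : ℝ, 0 ≤ M ∧ ∀ x ∈ S, ∀ v ∈ F x, ‖v‖ ≤ M) ?_ ?_ ?_ ?_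
  · exact ⟨0, le_rfl, by simp⟩
  · rintro s t hst ⟨M, h0, h⟩
    exact ⟨M, h0, fun x hx => h x (hst hx)⟩
  · rintro s t ⟨M, h0, h⟩ ⟨N, k0, k⟩
    refine ⟨max M N, h0.trans (le_max_left _ _), ?_⟩
    rintro x (hx | hx) v hv
    · exact (h x hx v hv).trans (le_max_left _ _)
    · exact (k x hx v hv).trans (le_max_right _ _)
  · intro x _
    obtain ⟨δ, hδ, h⟩ := hF.2 x 1 one_pos
    refine ⟨ball x δ, mem_nhdsWithin_of_mem_nhds (ball_mem_nhds _ hδ), ?_⟩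
    have hb : Bornology.IsBounded (thickening 1 (F x)) := (hF.1 x).2.2.isBounded.thickening
    obtain ⟨M, hM⟩ := hb.exists_norm_le
    exact ⟨max M 0, le_max_right _ _, fun y hy v hv => (hM v (h y hy hv)).trans (le_max_left _ _)⟩

/-- Compactness of solutions staying in a compact set. -/
theorem compact_sol {F : X m → Set (X m)} (hF : Standing F) {ι : Type*} (l : Ultrafilter ι)
    (γi : ι → ℝ → X m) {a b : ℝ} {K : Set (X m)} (hK : IsCompact K)
    (hsol : ∀ᶠ i in (l : Filter ι), IsSolOn F (γi i) (Icc a b))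
    (hin : ∀ᶠ i in (l : Filter ι), ∀ t ∈ Icc a b, γi i t ∈ K) :
    ∃ γ : ℝ → X m, IsSolOn F γ (Icc a b) ∧
      ∀ t ∈ Icc a b, γ t ∈ K ∧ Tendsto (fun i => γi i t) l (𝓝 (γ t)) := by
  have hex : ∀ t, ∃ y, t ∈ Icc a b → y ∈ K ∧ Tendsto (fun i => γi i t) l (𝓝 y) := by
    intro t
    by_cases ht : t ∈ Icc a b
    · obtain ⟨y, hy, hy'⟩ := hK.ultrafilter_le_nhds' (l.map fun i => γi i t)
        (Filter.mem_map.2 (hin.mono fun i hi => hi t ht))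
      exact ⟨y, fun _ => ⟨hy, hy'⟩⟩
    · exact ⟨0, fun h => absurd h ht⟩
  choose γ hγ using hex
  obtain ⟨M, hM0, hM⟩ := F_bdd hF hK
  refine ⟨γ, limit_sol hF (l : Filter ι) γi γ hM0 hsol ?_ fun t ht => (hγ t ht).2, hγ⟩
  filter_upwards [hin] with i hi t ht using hM _ (hi t ht)

lemma reach_trans {F : X m → Set (X m)} {s t : ℝ} (hs : 0 ≤ s) (ht : 0 ≤ t) {x y z : X m}
    (h1 : y ∈ reach F s x) (h2 : z ∈ reach F t y) : z ∈ reach F (s + t) x := by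
  obtain ⟨γ₁, a1, b1, c1⟩ := h1
  obtain ⟨γ₂, a2, b2, c2⟩ := h2
  have a2' : IsSolOn F (fun u => γ₂ (u + -s)) (Icc s (s + t)) := by
    apply sol_shift
    simpa using a2
  obtain ⟨γ, h, h', h''⟩ := sol_concat hs (by linarith) a1 a2' (by simp [b2, c1])
  exact ⟨γ, h, h'.trans b1, by simp [h'', c2]⟩

lemma reach_zero {F : X m → Set (X m)} (x : X m) : x ∈ reach F 0 x := by
  refine ⟨fun _ => x, ⟨fun _ => 0, fun s hs t ht => ⟨intervalIntegrable_const, by simp⟩, ?_⟩, rfl, rfl⟩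
  simp

lemma mem_reachSet {F : X m → Set (X m)} {t : ℝ} {B : Set (X m)} {y : X m} :
    y ∈ reachSet F t B ↔ ∃ x ∈ B, y ∈ reach F t x := by
  simp [reachSet]

lemma mem_omega_iff {F : X m → Set (X m)} {B : Set (X m)} {y : X m} :
    y ∈ omegaLim F B ↔ ∀ T : ℝ, ∀ ε > 0, ∃ t ≥ T, ∃ p ∈ reachSet F t B, dist p y < ε := by
  constructor
  · rintro ⟨t, p, ht, hp, hy⟩ T ε hε
    obtain ⟨n, h1, h2⟩ := ((ht.eventually_ge_atTop T).and
      (hy.eventually (Metric.ball_mem_nhds y hε))).exists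
    exact ⟨t n, h1, p n, hp n, h2⟩
  · intro h
    have h' : ∀ n : ℕ, ∃ t : ℝ, ∃ p : X m, (n : ℝ) ≤ t ∧ p ∈ reachSet F t B ∧
        dist p y < 1 / ((n : ℝ) + 1) := by
      intro n
      obtain ⟨t, ht, p, hp, hd⟩ := h n (1 / ((n : ℝ) + 1)) (by positivity)
      exact ⟨t, p, ht, hp, hd⟩
    choose t p h1 h2 h3 using h'
    refine ⟨t, p, tendsto_atTop_mono h1 tendsto_natCast_atTop_atTop, h2, ?_⟩
    rw [tendsto_iff_dist_tendsto_zero]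
    exact squeeze_zero (fun _ => dist_nonneg) (fun n => (h3 n).le)
      tendsto_one_div_add_atTop_nhds_zero_nat

/-- Passing to the limit on the last `s` units of time. -/
lemma back_limit {F : X m → Set (X m)} (hF : Standing F) {ι : Type*} (l : Ultrafilter ι)
    (γi : ι → ℝ → X m) (t : ι → ℝ) {B K : Set (X m)} (hK : IsCompact K) {y : X m} {s : ℝ}
    (hs : 0 ≤ s)
    (hsol : ∀ᶠ i in (l : Filter ι), IsSolOn F (γi i) (Icc 0 (t i)))
    (h0 : ∀ᶠ i in (l : Filter ι), γi i 0 ∈ B)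
    (ht : Tendsto t l atTop)
    (hin : ∀ᶠ i in (l : Filter ι), ∀ u ∈ Icc (t i - s) (t i), γi i u ∈ K)
    (hy : Tendsto (fun i => γi i (t i)) l (𝓝 y)) :
    ∃ x ∈ K ∩ omegaLim F B, y ∈ reach F s x := by
  have hsol' : ∀ᶠ i in (l : Filter ι), IsSolOn F (fun u => γi i (u + (t i - s))) (Icc 0 s) := by
    filter_upwards [hsol, ht.eventually_ge_atTop s] with i hi hti
    apply sol_shift
    exact sol_mono hi (Icc_subset_Icc (by linarith) (by linarith))
  obtain ⟨γ, h1, h2⟩ := compact_sol hF l (fun i u => γi i (u + (t i - s))) hK hsol' (by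
    filter_upwards [hin] with i hi u hu
    exact hi _ ⟨by linarith [hu.1], by linarith [hu.2]⟩)
  obtain ⟨k0, l0⟩ := h2 0 ⟨le_rfl, hs⟩
  obtain ⟨ks, ls⟩ := h2 s ⟨hs, le_rfl⟩
  refine ⟨γ 0, ⟨k0, ?_⟩, γ, h1, rfl, ?_⟩
  · rw [mem_omega_iff]
    intro T ε hε
    obtain ⟨i, a1, a2, a3, a4⟩ := (hsol.and (h0.and ((ht.eventually_ge_atTop (T + s)).and
      (l0.eventually (Metric.ball_mem_nhds _ hε))))).exists
    refine ⟨t i - s, by linarith, γi i (0 + (t i - s)), ?_, a4⟩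
    refine mem_reachSet.2 ⟨_, a2, γi i, sol_mono a1 (Icc_subset_Icc le_rfl (by linarith)), rfl, by simp⟩
  · refine tendsto_nhds_unique ls ?_
    simpa using hy

lemma exit_first {f : ℝ → ℝ} {a b c : ℝ} (hab : a ≤ b) (hf : ContinuousOn f (Icc a b))
    (ha : f a ≤ c) (hb : c ≤ f b) : ∃ u ∈ Icc a b, f u = c ∧ ∀ v ∈ Icc a u, f v ≤ c := by
  have hcl : IsCompact (Icc a b ∩ f ⁻¹' Ici c) := 
    isCompact_Icc.of_isClosed_subset (hf.preimage_isClosed_of_isClosed isClosed_Icc isClosed_Ici)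
      inter_subset_left
  obtain ⟨u, ⟨hu, huc⟩, hl⟩ := hcl.exists_isLeast ⟨b, ⟨hab, le_rfl⟩, hb⟩
  have hle : ∀ v ∈ Icc a u, v ≠ u → f v < c := by
    intro v hv hne
    by_contra! h
    exact hne (le_antisymm hv.2 (hl ⟨⟨hv.1, hv.2.trans hu.2⟩, h⟩))
  obtain ⟨w, hw, hwc⟩ := intermediate_value_Icc hu.1 (hf.mono (Icc_subset_Icc le_rfl hu.2)) ⟨ha, huc⟩
  have hwu : w = u := by
    by_contra h
    exact (hle w hw h).ne hwc
  subst hwu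
  refine ⟨w, hu, hwc, fun v hv => ?_⟩
  by_cases h : v = w
  · rw [h, hwc]
  · exact (hle v hv h).le

lemma stay_back {F : X m → Set (X m)} {γ : ℝ → X m} {a b M : ℝ} (h : IsSolOn F γ (Icc a b))
    (hM0 : 0 ≤ M) (hM : ∀ x ∈ closedBall (γ b) 1, ∀ v ∈ F x, ‖v‖ ≤ M) (hMab : M * (b - a) < 1) :
    ∀ t ∈ Icc a b, γ t ∈ closedBall (γ b) 1 := by
  intro t ht
  by_contra hcon
  rw [mem_closedBall, not_le] at hcon
  have hc : ContinuousOn (fun v => dist (γ (-v)) (γ b)) (Icc (-b) (-t)) := by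
    have h1 : ContinuousOn (fun v => γ (-v)) (Icc (-b) (-t)) :=
      (sol_cont h).comp continuousOn_neg (fun v hv => ⟨by linarith [hv.2, ht.1], by linarith [hv.1]⟩)
    exact continuous_dist.comp_continuousOn (h1.prodMk continuousOn_const)
  obtain ⟨u, hu, hu1, hu2⟩ := exit_first (c := 1) (by linarith [ht.2]) hc (by simp) (by simpa using hcon.le)
  have hub : -u ∈ Icc a b := ⟨by linarith [hu.2, ht.1], by linarith [hu.1]⟩
  have := sol_lip (sol_mono h (Icc_subset_Icc hub.1 le_rfl)) (M := M) (fun w hw v hv => by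
    refine hM _ ?_ v hv
    have := hu2 (-w) ⟨by linarith [hw.2], by linarith [hw.1]⟩
    simpa using this) b ⟨hub.2, le_rfl⟩ (-u) ⟨le_rfl, hub.2⟩
  rw [← dist_eq_norm, hu1, abs_of_nonpos (by linarith [hub.2])] at this
  have h3 : M * (-(-u - b)) ≤ M * (b - a) := by gcongr; linarith [hub.1]
  linarith

lemma neg_inv {F : X m → Set (X m)} (hF : Standing F) {B : Set (X m)}
    (hC : IsCompact (omegaLim F B)) :
    ∃ τ > 0, ∀ y ∈ omegaLim F B, ∃ x ∈ omegaLim F B, y ∈ reach F τ x := by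
  obtain ⟨M, hM0, hM⟩ := F_bdd hF (hC.cthickening (r := 2))
  refine ⟨1 / (M + 1), by positivity, fun y hy => ?_⟩
  have hyK : closedBall y 2 ⊆ cthickening 2 (omegaLim F B) :=
    closedBall_subset_cthickening hy _
  obtain ⟨t, p, ht, hp, hpy⟩ := hy
  have hp' : ∀ n, ∃ γ : ℝ → X m, IsSolOn F γ (Icc 0 (t n)) ∧ γ 0 ∈ B ∧ γ (t n) = p n := by
    intro n
    obtain ⟨x, hx, γ, h1, h2, h3⟩ := mem_reachSet.1 (hp n)
    exact ⟨γ, h1, by rwa [h2], h3⟩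
  choose γ h1 h2 h3 using hp'
  have hle : ((hyperfilter ℕ : Ultrafilter ℕ) : Filter ℕ) ≤ atTop := Nat.hyperfilter_le_atTop
  have ht' := ht.mono_left hle
  have hpy' := hpy.mono_left hle
  obtain ⟨x, hx, hxy⟩ := back_limit hF (hyperfilter ℕ) γ t (B := B) (hC.cthickening (r := 2)) (y := y)
    (s := 1 / (M + 1)) (by positivity) (Eventually.of_forall h1) (Eventually.of_forall h2) ht' (by
      filter_upwards [ht'.eventually_ge_atTop (1 / (M + 1)),
        hpy'.eventually (Metric.closedBall_mem_nhds y one_pos)] with n hn1 hn2 u hu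
      have hn2' : dist (p n) y ≤ 1 := hn2
      have hsub : closedBall (γ n (t n)) 1 ⊆ cthickening 2 (omegaLim F B) := by
        refine subset_trans (closedBall_subset_closedBall' ?_) hyK
        rw [h3]; linarith
      refine hsub (stay_back (sol_mono (h1 n) (Icc_subset_Icc (by linarith) le_rfl)) hM0
        (fun x hx => hM x (hsub hx)) ?_ u hu)
      rw [sub_sub_cancel, mul_one_div, div_lt_one (by positivity)]
      linarith) (by simpa only [h3] using hpy')
  exact ⟨x, hx.2, hxy⟩

lemma neg_inv_iter {F : X m → Set (X m)} {C : Set (X m)} {τ : ℝ} (hτ : 0 < τ)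
    (h : ∀ y ∈ C, ∃ x ∈ C, y ∈ reach F τ x) (n : ℕ) : ∀ y ∈ C, ∃ x ∈ C, y ∈ reach F (n * τ) x := by
  induction n with
  | zero => exact fun y hy => ⟨y, hy, by simpa using reach_zero y⟩
  | succ n ih =>
    intro y hy
    obtain ⟨x, hx, hxy⟩ := h y hy
    obtain ⟨z, hz, hzx⟩ := ih x hx
    refine ⟨z, hz, ?_⟩
    have := reach_trans (by positivity) hτ.le hzx hxy
    have e : ((n + 1 : ℕ) : ℝ) * τ = n * τ + τ := by push_cast; ring
    rwa [e]

lemma omega_of_reach {F : X m → Set (X m)} {B : Set (X m)} {τ t : ℝ} (hτ : 0 < τ) {z : X m}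
    (h : ∀ n : ℕ, z ∈ reachSet F (n * τ + t) B) : z ∈ omegaLim F B := by
  rw [mem_omega_iff]
  intro T ε hε
  obtain ⟨n, hn⟩ := exists_nat_ge ((T - t) / τ)
  rw [div_le_iff₀ hτ] at hn
  exact ⟨n * τ + t, by linarith, z, h n, by simpa using hε⟩

lemma pos_inv {F : X m → Set (X m)} (hF : Standing F) {B : Set (X m)}
    (hC : IsCompact (omegaLim F B)) (hCB : omegaLim F B ⊆ B) {t : ℝ} (ht : 0 ≤ t) {x z : X m}
    (hx : x ∈ omegaLim F B) (hz : z ∈ reach F t x) : z ∈ omegaLim F B := by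
  obtain ⟨τ, hτ, h⟩ := neg_inv hF hC
  refine omega_of_reach (t := t) hτ fun n => ?_
  obtain ⟨w, hw, hwx⟩ := neg_inv_iter hτ h n x hx
  exact mem_reachSet.2 ⟨w, hCB hw, reach_trans (by positivity) ht hwx hz⟩

/-- Solutions started in `U` that stay in `K ⊆ U'` for a long time end close to `A`. -/
lemma key_limit {F : X m → Set (X m)} (hF : Standing F) {ι : Type*} (l : Ultrafilter ι)
    {U U' K : Set (X m)} (hK : IsCompact K) (hKU : K ⊆ U')
    (γi : ι → ℝ → X m) (t : ι → ℝ) {y : X m}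
    (hsol : ∀ᶠ i in (l : Filter ι), IsSolOn F (γi i) (Icc 0 (t i)))
    (h0 : ∀ᶠ i in (l : Filter ι), γi i 0 ∈ U)
    (ht : Tendsto t l atTop)
    (hin : ∀ᶠ i in (l : Filter ι), ∀ u ∈ Icc 0 (t i), γi i u ∈ K)
    (hy : Tendsto (fun i => γi i (t i)) l (𝓝 y)) :
    y ∈ omegaLim F (U' ∩ omegaLim F U) := by
  refine omega_of_reach (t := 0) one_pos fun n => ?_
  obtain ⟨x, hx, hxy⟩ := back_limit hF l γi t (B := U) hK (y := y) (s := n) (by positivity)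
    hsol h0 ht (by
      filter_upwards [hin, ht.eventually_ge_atTop (n : ℝ)] with i hi hti u hu
      exact hi u ⟨by linarith [hu.1], hu.2⟩) hy
  exact mem_reachSet.2 ⟨x, ⟨hKU hx.1, hx.2⟩, by simpa using hxy⟩

/-- Stability of `A`. -/
lemma stability {F : X m → Set (X m)} (hF : Standing F) {U U' A : Set (X m)} {ε δ₀ : ℝ}
    (hA : IsCompact A) (hε : 0 < ε) (hδ₀ : 0 < δ₀) (hεU : cthickening ε A ⊆ U')
    (hδU : thickening δ₀ A ⊆ U) (hω : omegaLim F (U' ∩ omegaLim F U) ⊆ A)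
    (hpos : ∀ t ≥ 0, ∀ x ∈ A, reach F t x ⊆ A) :
    ∃ δ > 0, δ ≤ δ₀ ∧ ∀ T : ℝ, ∀ γ : ℝ → X m, IsSolOn F γ (Icc 0 T) → γ 0 ∈ thickening δ A →
      ∀ t ∈ Icc 0 T, γ t ∈ cthickening ε A := by
  by_contra! hcon
  have hδn : ∀ n : ℕ, 0 < min δ₀ (min ε (1 / ((n : ℝ) + 1))) := fun n => by
    refine lt_min hδ₀ (lt_min hε ?_); positivity
  have hex : ∀ n : ℕ, ∃ (t : ℝ) (γ : ℝ → X m), 0 ≤ t ∧ IsSolOn F γ (Icc 0 t) ∧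
      γ 0 ∈ thickening (min δ₀ (min ε (1 / ((n : ℝ) + 1)))) A ∧
      infDist (γ t) A = ε ∧ ∀ u ∈ Icc 0 t, γ u ∈ cthickening ε A := by
    intro n
    obtain ⟨T, γ, h1, h2, t, ht, h3⟩ := hcon _ (hδn n) (min_le_left _ _)
    have hne : A.Nonempty := by
      rw [mem_thickening_iff] at h2
      obtain ⟨z, hz, _⟩ := h2
      exact ⟨z, hz⟩
    have hmem : ∀ x, x ∈ cthickening ε A ↔ infDist x A ≤ ε := fun x => by
      rw [mem_cthickening_iff, infDist, ENNReal.le_ofReal_iff_toReal_le (infEDist_ne_top hne) hε.le]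
    have hc : ContinuousOn (fun u => infDist (γ u) A) (Icc 0 t) :=
      (continuous_infDist_pt A).comp_continuousOn
        ((sol_cont h1).mono (Icc_subset_Icc le_rfl ht.2))
    have h2' : infDist (γ 0) A < ε := by
      rw [mem_thickening_iff_infDist_lt hne] at h2
      exact h2.trans_le ((min_le_right _ _).trans (min_le_left _ _))
    rw [hmem, not_le] at h3
    obtain ⟨u, hu, hu1, hu2⟩ := exit_first ht.1 hc h2'.le h3.le
    exact ⟨u, γ, hu.1, sol_mono h1 (Icc_subset_Icc le_rfl (hu.2.trans ht.2)), h2, hu1,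
      fun v hv => (hmem _).2 (hu2 v hv)⟩
  choose t γ ht hsol hstart hend hin using hex
  have hKc : IsCompact (cthickening ε A) := hA.cthickening
  have hle : ((hyperfilter ℕ : Ultrafilter ℕ) : Filter ℕ) ≤ atTop := Nat.hyperfilter_le_atTop
  have hne : A.Nonempty := by
    have := hstart 0
    rw [mem_thickening_iff] at this
    obtain ⟨z, hz, _⟩ := this
    exact ⟨z, hz⟩
  -- limit of starting points lies in `A`
  have hstart0 : ∀ x, Tendsto (fun n => γ n 0) (hyperfilter ℕ : Filter ℕ) (𝓝 x) → x ∈ A := by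
    intro x hx
    rw [hA.isClosed.mem_iff_infDist_zero hne]
    have h1 : Tendsto (fun n => infDist (γ n 0) A) (hyperfilter ℕ : Filter ℕ) (𝓝 (infDist x A)) :=
      ((continuous_infDist_pt A).tendsto x).comp hx
    refine tendsto_nhds_unique h1 (Tendsto.mono_left ?_ hle)
    refine squeeze_zero (fun _ => infDist_nonneg) (fun n => ?_)
      (tendsto_one_div_add_atTop_nhds_zero_nat (𝕜 := ℝ))
    have := hstart n
    rw [mem_thickening_iff_infDist_lt hne] at this
    exact this.le.trans ((min_le_right _ _).trans (min_le_right _ _))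
  by_cases htt : Tendsto t (hyperfilter ℕ : Filter ℕ) atTop
  · obtain ⟨y, hyK, hy⟩ := hKc.ultrafilter_le_nhds' ((hyperfilter ℕ).map fun n => γ n (t n))
      (Filter.mem_map.2 (univ_mem' fun n => hin n _ ⟨ht n, le_rfl⟩))
    have hy' : Tendsto (fun n => γ n (t n)) (hyperfilter ℕ : Filter ℕ) (𝓝 y) := hy
    have hyA := hω (key_limit hF (hyperfilter ℕ) (U := U) hKc hεU γ t (Eventually.of_forall hsol)
      (Eventually.of_forall fun n => hδU (thickening_mono (min_le_left _ _) _ (hstart n))) htt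
      (Eventually.of_forall hin) hy')
    have h1 : Tendsto (fun n => infDist (γ n (t n)) A) (hyperfilter ℕ : Filter ℕ)
      (𝓝 (infDist y A)) := ((continuous_infDist_pt A).tendsto y).comp hy'
    simp only [hend] at h1
    have := tendsto_nhds_unique h1 tendsto_const_nhds
    rw [infDist_zero_of_mem hyA] at this
    exact hε.ne this
  · rw [Filter.tendsto_atTop] at htt
    push Not at htt
    obtain ⟨T, hT⟩ := htt
    have hT' : ∀ᶠ n in (hyperfilter ℕ : Filter ℕ), t n ∈ Icc 0 T := by
      filter_upwards [hT] with n hn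
      exact ⟨ht n, hn.le⟩
    obtain ⟨s, hs, hs'⟩ := isCompact_Icc.ultrafilter_le_nhds' ((hyperfilter ℕ).map t)
      (Filter.mem_map.2 hT')
    have hts : Tendsto t (hyperfilter ℕ : Filter ℕ) (𝓝 s) := hs'
    obtain ⟨M, hM0, hM⟩ := F_bdd hF hKc
    obtain ⟨η, hη, hηM⟩ : ∃ η > 0, M * (2 * η) < ε / 2 := by
      refine ⟨ε / (4 * (M + 1)), by positivity, ?_⟩
      rw [show M * (2 * (ε / (4 * (M + 1)))) = (M / (M + 1)) * (ε / 2) by field_simp; ring]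
      have : M / (M + 1) < 1 := by rw [div_lt_one (by positivity)]; linarith
      nlinarith
    set r := max 0 (s - η) with hr
    have hr0 : 0 ≤ r := le_max_left _ _
    have hrt : ∀ᶠ n in (hyperfilter ℕ : Filter ℕ), r ≤ t n ∧ t n - r ≤ 2 * η := by
      filter_upwards [hts.eventually (Metric.ball_mem_nhds s hη)] with n hn
      have hn' : |t n - s| < η := hn
      rw [abs_lt] at hn'
      exact ⟨max_le (ht n) (by linarith), by linarith [le_max_right 0 (s - η)]⟩
    obtain ⟨σ, hσ, hσl⟩ := compact_sol hF (hyperfilter ℕ) γ (a := 0) (b := r) hKc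
      (hrt.mono fun n hn => sol_mono (hsol n) (Icc_subset_Icc le_rfl hn.1))
      (hrt.mono fun n hn u hu => hin n u ⟨hu.1, hu.2.trans hn.1⟩)
    have hσ0 := hstart0 _ (hσl 0 ⟨le_rfl, hr0⟩).2
    have hσr : σ r ∈ A := hpos r hr0 _ hσ0 ⟨σ, hσ, rfl, rfl⟩
    obtain ⟨n, ⟨hn1, hn2⟩, hn3⟩ := (hrt.and ((hσl r ⟨hr0, le_rfl⟩).2.eventually
      (Metric.ball_mem_nhds _ (half_pos hε)))).exists
    have e1 := sol_lip (hsol n) (fun u hu => hM _ (hin n u hu)) r ⟨hr0, hn1⟩ (t n) ⟨ht n, le_rfl⟩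
    rw [abs_of_nonneg (by linarith), ← dist_eq_norm] at e1
    have e2 : M * (t n - r) ≤ M * (2 * η) := by gcongr
    have e3 : dist (γ n r) (σ r) < ε / 2 := hn3
    have e4 := infDist_le_dist_of_mem (x := γ n (t n)) hσr
    rw [hend] at e4
    have e5 := dist_triangle (γ n (t n)) (γ n r) (σ r)
    linarith

/-- Theorem 2.6: an attractor in the attractor `𝒜` is an attractor
of the differential inclusion in the whole space `X`. -/
theorem attractorIn_is_attractor {m : ℕ} (F : X m → Set (X m)) (hF : Standing F)
    (𝒜 : Set (X m)) (h𝒜 : IsAttractor F 𝒜)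
    (A : Set (X m)) (hA : IsAttractorIn F 𝒜 A) :
    IsAttractor F A := by
  obtain ⟨h𝒜c, U, hU, rfl⟩ := h𝒜
  obtain ⟨hAc, hAsub, U', hU', hω⟩ := hA
  have hAB : A ⊆ U' ∩ omegaLim F U := fun x hx => ⟨interior_subset (hU' hx), hAsub hx⟩
  have hωc : IsCompact (omegaLim F (U' ∩ omegaLim F U)) := by rwa [hω]
  have hpos : ∀ t ≥ 0, ∀ x ∈ A, reach F t x ⊆ A := by
    intro t ht x hx z hz
    have := pos_inv hF hωc (by rwa [hω]) ht (by rwa [hω]) hz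
    rwa [hω] at this
  obtain ⟨ε, hε, hεU⟩ := hAc.exists_cthickening_subset_open isOpen_interior hU'
  obtain ⟨δ₀, hδ₀, hδU⟩ := hAc.exists_thickening_subset_open isOpen_interior (hAsub.trans hU)
  obtain ⟨δ, hδ, hδle, hstab⟩ := stability hF hAc hε hδ₀ (hεU.trans interior_subset)
    (hδU.trans interior_subset) hω.subset hpos
  have hsub : A ⊆ thickening δ A := self_subset_thickening hδ A
  refine ⟨hAc, thickening δ A, by rwa [isOpen_thickening.interior_eq], Subset.antisymm ?_ ?_⟩
  · rintro y ⟨t, p, ht, hp, hpy⟩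
    have hp' : ∀ n, ∃ γ : ℝ → X m, IsSolOn F γ (Icc 0 (t n)) ∧ γ 0 ∈ thickening δ A ∧
        γ (t n) = p n := by
      intro n
      obtain ⟨x, hx, γ, h1, h2, h3⟩ := mem_reachSet.1 (hp n)
      exact ⟨γ, h1, by rwa [h2], h3⟩
    choose γ h1 h2 h3 using hp'
    have hle : ((hyperfilter ℕ : Ultrafilter ℕ) : Filter ℕ) ≤ atTop := Nat.hyperfilter_le_atTop
    rw [← hω]
    refine key_limit hF (hyperfilter ℕ) (U := U) hAc.cthickening (hεU.trans interior_subset) γ t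
      (Eventually.of_forall h1)
      (Eventually.of_forall fun n => interior_subset (hδU (thickening_mono hδle _ (h2 n))))
      (ht.mono_left hle) (Eventually.of_forall fun n => hstab _ _ (h1 n) (h2 n)) ?_
    simpa only [h3] using hpy.mono_left hle
  · intro y hy
    obtain ⟨τ, hτ, h⟩ := neg_inv hF hωc
    rw [hω] at h
    refine omega_of_reach (t := 0) hτ fun n => ?_
    obtain ⟨x, hx, hxy⟩ := neg_inv_iter hτ h n y hy
    exact mem_reachSet.2 ⟨x, hsub hx, by simpa using hxy⟩

end DI
end

section
/- Let O ⊆ ℝ^m be open, 𝒜 ⊆ O closed in O, and let V ∈ C(O) be such that V is C^∞ on O ∖ 𝒜, V = 0 on 𝒜, and V > 0 on O ∖ 𝒜. Then there exists a nonnegative function β ∈ C^∞([0,∞)) with β^{(k)}(0) = 0 for all k = 0,1,2,…, lim_{t→∞} β(t) = +∞, and β'(t) > 0 for all t > 0, such that W(x) = β(V(x)) is a C^∞ function on O. -/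
open Set Filter Topology MeasureTheory Metric Pointwise

namespace DI

variable {m : ℕ}

/-- A countable family of compactly supported cutoffs subordinate to an open set. -/
theorem exists_cutoffs {E : Type*} [NormedAddCommGroup E] [NormedSpace ℝ E]
    [FiniteDimensional ℝ E] [HasContDiffBump E] (O : Set E) (hO : IsOpen O) :
    ∃ χ : ℕ → E → ℝ, (∀ j, ContDiff ℝ (⊤ : ℕ∞) (χ j)) ∧ (∀ j, HasCompactSupport (χ j)) ∧
      (∀ j, tsupport (χ j) ⊆ O) ∧ ∀ x ∈ O, ∃ j, ∀ᶠ y in 𝓝 x, χ j y = 1 := by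
  have : ProperSpace E := FiniteDimensional.proper ℝ E
  rcases O.eq_empty_or_nonempty with rfl | hne
  · refine ⟨fun _ _ => 0, fun _ => contDiff_const, fun _ => HasCompactSupport.zero, fun _ => ?_, ?_⟩
    · intro x hx
      simp [tsupport] at hx
    · simp
  · have h1 : ∀ x : E, x ∈ O → ∃ f : ContDiffBump x, closedBall x f.rOut ⊆ O := by
      intro x hx
      obtain ⟨r, hr, h⟩ := Metric.nhds_basis_closedBall.mem_iff.1 (hO.mem_nhds hx)
      exact ⟨⟨r / 2, r, by positivity, by linarith⟩, h⟩
    choose! f hf using h1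
    obtain ⟨t, htO, htc, htU⟩ := TopologicalSpace.countable_cover_nhdsWithin
      (s := O) (f := fun x => ball x (f x).rIn)
      (fun x _ => mem_nhdsWithin_of_mem_nhds (ball_mem_nhds x (f x).rIn_pos))
    have htne : t.Nonempty := by
      obtain ⟨x, hx⟩ := hne
      have := htU hx
      simp only [mem_iUnion] at this
      obtain ⟨i, hi, -⟩ := this
      exact ⟨i, hi⟩
    obtain ⟨u, rfl⟩ := htc.exists_eq_range htne
    refine ⟨fun j => f (u j), fun j => (f (u j)).contDiff, fun j => (f (u j)).hasCompactSupport,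
      fun j => ?_, fun x hx => ?_⟩
    · rw [(f (u j)).tsupport_eq]
      exact hf _ (htO ⟨j, rfl⟩)
    · have := htU hx
      simp only [mem_iUnion] at this
      obtain ⟨i, ⟨j, rfl⟩, hi⟩ := this
      exact ⟨j, (f (u j)).eventuallyEq_one_of_mem_ball hi⟩

/-- A sequence of smooth functions on an open set, multiplied by sufficiently small
coefficients, has a smooth sum. -/
theorem exists_small_coeffs {E : Type*} [NormedAddCommGroup E] [NormedSpace ℝ E]
    [FiniteDimensional ℝ E] [HasContDiffBump E] (O : Set E) (hO : IsOpen O)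
    (f : ℕ → E → ℝ) (hf : ∀ n, ContDiffOn ℝ (⊤ : ℕ∞) (f n) O) :
    ∃ c : ℕ → ℝ, (∀ n, 0 < c n) ∧ ∀ d : ℕ → ℝ, (∀ n, 0 ≤ d n) → (∀ n, d n ≤ c n) →
      (∀ x ∈ O, Summable fun n => d n * f n x) ∧
      ContDiffOn ℝ (⊤ : ℕ∞) (fun x => ∑' n, d n * f n x) O := by
  obtain ⟨χ, hχs, hχc, hχO, hχ1⟩ := exists_cutoffs O hO
  let g : ℕ → ℕ → E → ℝ := fun j n x => χ j x * f n x
  have hg : ∀ j n, ContDiff ℝ (⊤ : ℕ∞) (g j n) := by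
    intro j n
    rw [contDiff_iff_contDiffAt]
    intro x
    by_cases hx : x ∈ tsupport (χ j)
    · exact (hχs j).contDiffAt.mul ((hf n).contDiffAt (hO.mem_nhds (hχO j hx)))
    · have : g j n =ᶠ[𝓝 x] fun _ => 0 := by
        filter_upwards [(notMem_tsupport_iff_eventuallyEq.1 hx)] with y hy
        simp [g, hy]
      exact contDiffAt_const.congr_of_eventuallyEq this
  have hgc : ∀ j n, HasCompactSupport (g j n) := fun j n => (hχc j).mul_right
  have hB : ∀ j n k, ∃ B : ℝ, ∀ x, ‖iteratedFDeriv ℝ k (g j n) x‖ ≤ B := by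
    intro j n k
    have hcont : Continuous (iteratedFDeriv ℝ k (g j n)) :=
      (hg j n).continuous_iteratedFDeriv (by exact_mod_cast le_top)
    obtain ⟨B, hB⟩ := ((hgc j n).iteratedFDeriv (𝕜 := ℝ) k).exists_bound_of_continuous hcont
    exact ⟨B, hB⟩
  choose B hB using hB
  let S : ℕ → ℝ := fun n => ∑ j ∈ Finset.range (n + 1), ∑ k ∈ Finset.range (n + 1), |B j n k|
  have hS0 : ∀ n, 0 ≤ S n := fun n =>
    Finset.sum_nonneg fun j _ => Finset.sum_nonneg fun k _ => abs_nonneg _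
  have hSB : ∀ j n k, j ≤ n → k ≤ n → B j n k ≤ S n := by
    intro j n k hj hk
    calc B j n k ≤ |B j n k| := le_abs_self _
      _ ≤ ∑ k ∈ Finset.range (n + 1), |B j n k| :=
        Finset.single_le_sum (f := fun k => |B j n k|) (fun _ _ => abs_nonneg _)
          (Finset.mem_range.2 (by omega))
      _ ≤ S n := Finset.single_le_sum
          (f := fun j => ∑ k ∈ Finset.range (n + 1), |B j n k|)
          (fun _ _ => Finset.sum_nonneg fun k _ => abs_nonneg _) (Finset.mem_range.2 (by omega))
  refine ⟨fun n => (1 / 2) ^ n / (1 + S n), fun n => by have := hS0 n; positivity, ?_⟩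
  intro d hd0 hdc
  have hbound : ∀ j n k, j ≤ n → k ≤ n → ∀ x,
      ‖iteratedFDeriv ℝ k (fun x => d n * g j n x) x‖ ≤ (1 / 2 : ℝ) ^ n := by
    intro j n k hj hk x
    have h1 : iteratedFDeriv ℝ k (fun x => d n * g j n x) x
        = d n • iteratedFDeriv ℝ k (g j n) x :=
      iteratedFDeriv_const_smul_apply' (a := d n)
        (((hg j n).of_le (by exact_mod_cast le_top)).contDiffAt)
    rw [h1, norm_smul, Real.norm_of_nonneg (hd0 n)]
    have h2 : ‖iteratedFDeriv ℝ k (g j n) x‖ ≤ 1 + S n := by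
      have := hB j n k x
      have := hSB j n k hj hk
      linarith
    have h3 := hS0 n
    calc d n * ‖iteratedFDeriv ℝ k (g j n) x‖ ≤ (1 / 2) ^ n / (1 + S n) * (1 + S n) :=
          mul_le_mul (hdc n) h2 (norm_nonneg _) (by positivity)
      _ = (1 / 2) ^ n := by field_simp
  have hgeom : Summable fun n : ℕ => (1 / 2 : ℝ) ^ n := summable_geometric_two
  have hsm : ∀ j, ContDiff ℝ (⊤ : ℕ∞) (fun x => ∑' n, d n * g j n x) := by
    intro j
    refine contDiff_tsum_of_eventually (v := fun _ n => (1 / 2 : ℝ) ^ n)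
      (fun n => contDiff_const.mul (hg j n)) (fun _ _ => hgeom) ?_
    intro k _
    rw [Nat.cofinite_eq_atTop]
    filter_upwards [eventually_ge_atTop (max j k)] with n hn
    exact hbound j n k (le_trans (le_max_left _ _) hn) (le_trans (le_max_right _ _) hn)
  constructor
  · intro x hx
    obtain ⟨j, hj⟩ := hχ1 x hx
    refine Summable.of_norm_bounded_eventually_nat hgeom ?_
    filter_upwards [eventually_ge_atTop j] with n hn
    have := hbound j n 0 hn (Nat.zero_le _) x
    simpa [g, hj.self_of_nhds] using this
  · intro x hx
    obtain ⟨j, hj⟩ := hχ1 x hx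
    refine ContDiffAt.contDiffWithinAt ((hsm j).contDiffAt.congr_of_eventuallyEq ?_)
    filter_upwards [hj] with y hy
    simp [g, hy]

/-- The basic building block: flat on `(-∞, 0]`, strictly increasing and unbounded on `(0, ∞)`. -/
noncomputable def ramp (t : ℝ) : ℝ := t * expNegInvGlue t

theorem ramp_contDiff : ContDiff ℝ (⊤ : ℕ∞) ramp := contDiff_id.mul expNegInvGlue.contDiff

theorem ramp_zero {t : ℝ} (h : t ≤ 0) : ramp t = 0 := by
  simp [ramp, expNegInvGlue.zero_of_nonpos h]

theorem ramp_nonneg (t : ℝ) : 0 ≤ ramp t := by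
  rcases le_total t 0 with h | h
  · rw [ramp_zero h]
  · exact mul_nonneg h (expNegInvGlue.nonneg t)

theorem ramp_mono : Monotone ramp := by
  intro s t hst
  rcases le_total s 0 with h | h
  · rw [ramp_zero h]
    exact ramp_nonneg t
  · exact mul_le_mul hst (expNegInvGlue.monotone hst) (expNegInvGlue.nonneg s) (h.trans hst)

theorem ramp_deriv_pos {t : ℝ} (h : 0 < t) : 0 < deriv ramp t := by
  have hd : DifferentiableAt ℝ expNegInvGlue t :=
    (expNegInvGlue.contDiff (n := 1)).differentiable (by norm_num) t
  have h1 : HasDerivAt ramp (1 * expNegInvGlue t + t * deriv expNegInvGlue t) t :=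
    (hasDerivAt_id t).mul hd.hasDerivAt
  rw [h1.deriv]
  have := expNegInvGlue.pos_of_pos h
  have h2 : 0 ≤ deriv expNegInvGlue t := expNegInvGlue.monotone.deriv_nonneg
  have := mul_nonneg h.le h2
  linarith

theorem ramp_tendsto : Tendsto ramp atTop atTop := by
  have h1 : 0 < expNegInvGlue 1 := expNegInvGlue.pos_of_pos one_pos
  refine tendsto_atTop_mono' _ ?_ (tendsto_id.atTop_mul_const h1)
  filter_upwards [eventually_ge_atTop 1] with t ht
  exact mul_le_mul_of_nonneg_left (expNegInvGlue.monotone ht) (by simp; linarith)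

/-- Lemma 3.6, after [LSW, Lemma 4.3]: smoothing a continuous
function vanishing exactly on a relatively closed set `𝒜 ⊆ O` and smooth off `𝒜`,
by composing with a suitable smooth `β` flat at `0`. -/
theorem smoothing_composition {m : ℕ} (O 𝒜 : Set (X m)) (hO : IsOpen O)
    (h𝒜O : 𝒜 ⊆ O) (hclosed : O ∩ closure 𝒜 ⊆ 𝒜)
    (V : X m → ℝ) (hVc : ContinuousOn V O) (hVsm : ContDiffOn ℝ (⊤ : ℕ∞) V (O \ 𝒜))
    (hV0 : ∀ x ∈ 𝒜, V x = 0) (hVpos : ∀ x ∈ O \ 𝒜, 0 < V x) :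
    ∃ β : ℝ → ℝ, ContDiffOn ℝ (⊤ : ℕ∞) β (Ici 0) ∧ (∀ t ∈ Ici (0:ℝ), 0 ≤ β t) ∧
      (∀ k : ℕ, iteratedDerivWithin k β (Ici 0) 0 = 0) ∧
      Tendsto β atTop atTop ∧ (∀ t > (0:ℝ), 0 < derivWithin β (Ici 0) t) ∧
      ContDiffOn ℝ (⊤ : ℕ∞) (fun x => β (V x)) O := by
  let τ : ℕ → ℝ := fun n => 1 / ((n : ℝ) + 1)
  have hτ : ∀ n, 0 < τ n := fun n => by positivity
  let ψ : ℕ → ℝ → ℝ := fun n t => ramp (t - τ n)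
  have hψ : ∀ n, ContDiff ℝ (⊤ : ℕ∞) (ψ n) := fun n =>
    ramp_contDiff.comp (contDiff_id.sub contDiff_const)
  have hψm : ∀ n, Monotone (ψ n) := fun n s t h => ramp_mono (by linarith)
  have hopen : IsOpen (O \ 𝒜) := by
    have : O \ 𝒜 = O ∩ (closure 𝒜)ᶜ := by
      ext x
      constructor
      · rintro ⟨h1, h2⟩
        exact ⟨h1, fun h => h2 (hclosed ⟨h1, h⟩)⟩
      · rintro ⟨h1, h2⟩
        exact ⟨h1, fun h => h2 (subset_closure h)⟩
    rw [this]
    exact hO.inter isClosed_closure.isOpen_compl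
  have hψV : ∀ n, ContDiffOn ℝ (⊤ : ℕ∞) (fun x => ψ n (V x)) O := by
    intro n x hx
    apply ContDiffAt.contDiffWithinAt
    by_cases hxA : x ∈ 𝒜
    · have hc : ContinuousAt V x := hVc.continuousAt (hO.mem_nhds hx)
      have hlt : ∀ᶠ y in 𝓝 x, V y < τ n :=
        hc.eventually_lt_const (by rw [hV0 x hxA]; exact hτ n)
      have : (fun x => ψ n (V x)) =ᶠ[𝓝 x] fun _ => 0 := by
        filter_upwards [hlt] with y hy
        exact ramp_zero (by linarith)
      exact contDiffAt_const.congr_of_eventuallyEq this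
    · exact (hψ n).contDiffAt.comp x (hVsm.contDiffAt (hopen.mem_nhds ⟨hx, hxA⟩))
  obtain ⟨c, hc0, hc⟩ := exists_small_coeffs O hO _ hψV
  obtain ⟨c', hc0', hc'⟩ := exists_small_coeffs (univ : Set ℝ) isOpen_univ ψ
    (fun n => (hψ n).contDiffOn)
  let d : ℕ → ℝ := fun n => min (c n) (c' n)
  have hd : ∀ n, 0 < d n := fun n => lt_min (hc0 n) (hc0' n)
  obtain ⟨-, hW⟩ := hc d (fun n => (hd n).le) (fun n => min_le_left _ _)
  obtain ⟨hsum, hβ⟩ := hc' d (fun n => (hd n).le) (fun n => min_le_right _ _)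
  rw [contDiffOn_univ] at hβ
  have hsum' : ∀ t, Summable fun n => d n * ψ n t := fun t => hsum t (mem_univ t)
  set β : ℝ → ℝ := fun t => ∑' n, d n * ψ n t with hβdef
  have hterm : ∀ n t, 0 ≤ d n * ψ n t := fun n t => mul_nonneg (hd n).le (ramp_nonneg _)
  have hβ0 : ∀ t ≤ 0, β t = 0 := by
    intro t ht
    have : ∀ n, d n * ψ n t = 0 := by
      intro n
      have := hτ n
      have h : ψ n t = 0 := ramp_zero (by linarith)
      rw [h, mul_zero]
    simp [hβdef, this]
  refine ⟨β, hβ.contDiffOn, fun t _ => tsum_nonneg fun n => hterm n t, ?_, ?_, ?_, hW⟩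
  · intro k
    have hk : ContDiffAt ℝ k β 0 := (hβ.of_le (by exact_mod_cast le_top)).contDiffAt
    rw [iteratedDerivWithin_eq_iteratedDeriv (uniqueDiffOn_Ici 0) hk self_mem_Ici,
      ← iteratedDerivWithin_eq_iteratedDeriv (uniqueDiffOn_Iic 0) hk self_mem_Iic,
      iteratedDerivWithin_congr (s := Iic 0) (g := fun _ => (0 : ℝ)) (fun t ht => hβ0 t ht) self_mem_Iic]
    simp
  · have h0 : Tendsto (fun t => d 0 * ψ 0 t) atTop atTop := by
      refine Tendsto.const_mul_atTop (hd 0) ?_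
      exact ramp_tendsto.comp (tendsto_atTop_add_const_right _ _ tendsto_id)
    exact tendsto_atTop_mono (fun t => (hsum' t).le_tsum 0 fun n _ => hterm n t) h0
  · intro t ht
    rw [derivWithin_of_mem_nhds (Ici_mem_nhds ht)]
    obtain ⟨n, hn⟩ := exists_nat_one_div_lt ht
    have hm : Monotone fun s => β s - d n * ψ n s := by
      intro r s hrs
      have h1 : d n * ψ n s - d n * ψ n r ≤ ∑' i, (d i * ψ i s - d i * ψ i r) :=
        ((hsum' s).sub (hsum' r)).le_tsum n fun i _ =>
          sub_nonneg.2 (mul_le_mul_of_nonneg_left (hψm i hrs) (hd i).le)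
      rw [(hsum' s).tsum_sub (hsum' r)] at h1
      change β r - d n * ψ n r ≤ β s - d n * ψ n s
      simp only [hβdef]
      linarith
    have hβd : DifferentiableAt ℝ β t := hβ.differentiable (by simp) t
    have hψd : DifferentiableAt ℝ (ψ n) t := (hψ n).differentiable (by simp) t
    have h2 := hm.deriv_nonneg (x := t)
    have h3 : HasDerivAt (fun s => β s - d n * ψ n s) (deriv β t - d n * deriv (ψ n) t) t :=
      hβd.hasDerivAt.sub (hψd.hasDerivAt.const_mul (d n))
    rw [h3.deriv] at h2
    have h4 : 0 < deriv (ψ n) t := by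
      have : deriv (ψ n) t = deriv ramp (t - τ n) := deriv_comp_sub_const ..
      rw [this]
      exact ramp_deriv_pos (sub_pos.2 hn)
    have := mul_pos (hd n) h4
    linarith

end DI
end

section
/- For any δ, R > 0 there exists a Lipschitz continuous set-valued map F_L : X → 𝒞(X) (i.e., there is L > 0 with F_L(x) ⊆ F_L(y) + L|x−y|·B̄₁ for all x, y ∈ X, and each F_L(x) is a nonempty compact convex subset of X) such that F(x) ⊆ F_L(x) ⊆ clconv F(x + δ·B̄₁) + δ·B̄₁ for all x ∈ B̄_R, where B̄_R is the closed ball of radius R centered at 0. -/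
open Set Filter Topology MeasureTheory Metric Pointwise

namespace DI

variable {m : ℕ}

/-- An upper semicontinuous compact-valued map is bounded on compact sets. -/
theorem Standing.isBounded_image {m : ℕ} {F : X m → Set (X m)} (hF : Standing F)
    {K : Set (X m)} (hK : IsCompact K) : Bornology.IsBounded (⋃ y ∈ K, F y) := by
  refine hK.induction_on (p := fun S => Bornology.IsBounded (⋃ y ∈ S, F y)) ?_ ?_ ?_ ?_
  · simp
  · intro s t hst ht
    exact ht.subset (biUnion_subset_biUnion_left hst)
  · intro s t hs ht
    rw [biUnion_union]
    exact hs.union ht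
  · intro x _
    obtain ⟨r, hr, h⟩ := hF.2 x 1 one_pos
    refine ⟨Metric.ball x r, mem_nhdsWithin_of_mem_nhds (Metric.ball_mem_nhds x hr), ?_⟩
    refine ((hF.1 x).2.2.isBounded.thickening (δ := 1)).subset ?_
    exact iUnion₂_subset fun y hy => h y hy

/-- The local pieces: closed convex hulls of images of closed balls. -/
def piece {m : ℕ} (F : X m → Set (X m)) (r : ℝ) (x : X m) : Set (X m) :=
  closure (convexHull ℝ (⋃ y ∈ Metric.closedBall x r, F y))

theorem piece_convex {m : ℕ} (F : X m → Set (X m)) (r : ℝ) (x : X m) :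
    Convex ℝ (piece F r x) := (convex_convexHull ℝ _).closure

theorem subset_piece {m : ℕ} (F : X m → Set (X m)) {r : ℝ} {x y : X m}
    (h : y ∈ Metric.closedBall x r) : F y ⊆ piece F r x :=
  (subset_biUnion_of_mem (u := F) h).trans
    ((subset_convexHull ℝ _).trans subset_closure)

theorem piece_mono {m : ℕ} (F : X m → Set (X m)) {r s : ℝ} {x y : X m}
    (h : Metric.closedBall x r ⊆ Metric.closedBall y s) : piece F r x ⊆ piece F s y :=
  closure_mono (convexHull_mono (biUnion_subset_biUnion_left h))

theorem Standing.isCompact_piece {m : ℕ} {F : X m → Set (X m)} (hF : Standing F)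
    (r : ℝ) (x : X m) : IsCompact (piece F r x) :=
  Metric.isCompact_of_isClosed_isBounded isClosed_closure
    (isBounded_convexHull.2 (hF.isBounded_image (isCompact_closedBall x r))).closure

theorem exists_weights {m : ℕ} (r R : ℝ) (hr : 0 < r) :
    ∃ (t : Finset (X m)) (w : t → X m → ℝ),
      (∀ i x, 0 ≤ w i x) ∧ (∀ x ∈ Metric.closedBall (0 : X m) R, ∑ i, w i x = 1) ∧
      (∀ i x, w i x ≠ 0 → dist x i < r) ∧ (∀ i, ∃ C : NNReal, LipschitzWith C (w i)) := by
  obtain ⟨t, -, ht, hcov⟩ := (isCompact_closedBall (0 : X m) R).finite_cover_balls hr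
  lift t to Finset (X m) using ht
  obtain ⟨f, hf⟩ := SmoothPartitionOfUnity.exists_isSubordinate (modelWithCornersSelf ℝ (X m))
    (Metric.isClosed_closedBall (x := (0 : X m)) (ε := R))
    (fun i : t => Metric.ball (i : X m) r) (fun _ => Metric.isOpen_ball)
    (by
      intro x hx
      obtain ⟨i, hi, hxi⟩ := mem_iUnion₂.1 (hcov hx)
      exact mem_iUnion.2 ⟨⟨i, hi⟩, hxi⟩)
  refine ⟨t, fun i x => f i x, fun i x => f.nonneg i x, ?_, ?_, ?_⟩
  · intro x hx
    rw [← finsum_eq_sum_of_fintype]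
    exact f.sum_eq_one hx
  · intro i x hx
    exact hf i (subset_tsupport _ hx)
  · intro i
    refine ContDiff.lipschitzWith_of_hasCompactSupport (𝕂 := ℝ) (n := (⊤ : ℕ∞)) ?_
      (f i).contMDiff.contDiff (by simp)
    exact (isCompact_closedBall (i : X m) r).of_isClosed_subset (isClosed_tsupport _)
      ((hf i).trans Metric.ball_subset_closedBall)

/-- Lemma 3.8: Lipschitz approximate selections: for any
`δ, R > 0` there is a Lipschitz set-valued map `F_L` with nonempty compact convex
values such that `F(x) ⊆ F_L(x) ⊆ clconv F(x+δB̄₁) + δB̄₁` on the ball `B̄_R`. -/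
theorem lipschitz_approximation {m : ℕ} (F : X m → Set (X m)) (hF : Standing F)
    (δ R : ℝ) (hδ : 0 < δ) (hR : 0 < R) :
    ∃ FL : X m → Set (X m),
      (∀ x, (FL x).Nonempty ∧ Convex ℝ (FL x) ∧ IsCompact (FL x)) ∧
      (∃ L > (0:ℝ), ∀ x y : X m,
        FL x ⊆ FL y + Metric.closedBall (0 : X m) (L * ‖x - y‖)) ∧
      (∀ x ∈ Metric.closedBall (0 : X m) R, F x ⊆ FL x ∧ FL x ⊆ inflate F δ x) := by
  obtain ⟨t, w, w0, w1, wd, wL⟩ := exists_weights (m := m) (δ / 2) R (half_pos hδ)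
  choose C hC using wL
  have hcomp := fun i : t => hF.isCompact_piece (δ / 2) (i : X m)
  choose M hM using fun i : t => (hcomp i).isBounded.exists_norm_le
  let T : X m → (t → X m) →ₗ[ℝ] X m := fun x => ∑ i, w i x • LinearMap.proj i
  have hT : ∀ x c, T x c = ∑ i, w i x • c i := by
    intro x c
    simp [T]
  let P : Set (t → X m) := Set.pi univ fun i => piece F (δ / 2) (i : X m)
  have hne : ∀ i : t, (piece F (δ / 2) (i : X m)).Nonempty := fun i =>
    (hF.1 i).1.mono (subset_piece F (Metric.mem_closedBall_self (half_pos hδ).le))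
  refine ⟨fun x => T x '' P, fun x => ⟨?_, ?_, ?_⟩, ?_, ?_⟩
  · exact (univ_pi_nonempty_iff.2 hne).image _
  · exact (convex_pi fun i _ => piece_convex F _ _).linear_image (T x)
  · exact (isCompact_univ_pi hcomp).image (T x).continuous_of_finiteDimensional
  · refine ⟨∑ i, (C i : ℝ) * |M i| + 1, by positivity, ?_⟩
    rintro x y _ ⟨c, hc, rfl⟩
    refine ⟨T y c, mem_image_of_mem _ hc, T x c - T y c, ?_, by simp⟩
    rw [mem_closedBall_zero_iff, hT, hT, ← Finset.sum_sub_distrib]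
    calc ‖∑ i, (w i x • c i - w i y • c i)‖
        ≤ ∑ i, ‖w i x • c i - w i y • c i‖ := norm_sum_le _ _
      _ ≤ ∑ i, (C i : ℝ) * |M i| * ‖x - y‖ := by
          refine Finset.sum_le_sum fun i _ => ?_
          rw [← sub_smul, norm_smul]
          have h1 := (hC i).norm_sub_le x y
          have h2 : ‖c i‖ ≤ |M i| := (hM i _ (hc i (mem_univ i))).trans (le_abs_self _)
          calc _ ≤ (C i : ℝ) * ‖x - y‖ * |M i| := by gcongr
            _ = _ := by ring
      _ ≤ _ := by
          rw [← Finset.sum_mul]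
          gcongr
          linarith
  · intro x hx
    constructor
    · intro v hv
      have : ∀ i : t, ∃ c ∈ piece F (δ / 2) (i : X m), w i x • c = w i x • v := by
        intro i
        by_cases h : w i x = 0
        · obtain ⟨c, hc⟩ := hne i
          exact ⟨c, hc, by simp [h]⟩
        · exact ⟨v, subset_piece F (wd i x h).le hv, rfl⟩
      choose c hc hcv using this
      refine ⟨c, fun i _ => hc i, ?_⟩
      rw [hT, Finset.sum_congr rfl fun i _ => hcv i, ← Finset.sum_smul, w1 x hx, one_smul]
    · rintro _ ⟨c, hc, rfl⟩
      refine ⟨T x c, ?_, 0, Metric.mem_closedBall_self hδ.le, by simp⟩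
      change T x c ∈ piece F δ x
      obtain ⟨v, hv⟩ := (hF.1 x).1
      have hv' : v ∈ piece F δ x := subset_piece F (Metric.mem_closedBall_self hδ.le) hv
      have : T x c = ∑ i, w i x • (if w i x = 0 then v else c i) := by
        rw [hT]
        refine Finset.sum_congr rfl fun i _ => ?_
        split_ifs with h <;> simp [h]
      rw [this]
      refine (piece_convex F δ x).sum_mem (fun i _ => w0 i x) (w1 x hx) fun i _ => ?_
      split_ifs with h
      · exact hv'
      · refine piece_mono F (Metric.closedBall_subset_closedBall' ?_) (hc i (mem_univ i))
        have := wd i x h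
        rw [dist_comm] at this
        linarith

end DI
end
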